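/- arXiv:2106.14980 — 3 statements merged into one kernel-verified Lean document; each statement's English description precedes it below -/
import Mathlib

section
/- Let a ≥ b > 0 be integers with gcd(a,b) = 1 and (a,b) ≠ (2,1). Let A ∈ ℤ^{m×n} with m ≥ n and rank(A) = n be {a,b,0}-modular. Then there exist a permutation matrix P ∈ {0,1}^{m×m}, a diagonal matrix E ∈ ℤ^{m×m} with diagonal entries in {1,−1}, and a unimodular matrix Q ∈ ℤ^{n×n} (det Q = ±1) such that E·P·A·Q has the block form [L 0 u; 0 R w], where L ∈ ℤ^{m₁×n₁} and R ∈ ℤ^{m₂×n₂} are totally unimodular, n₁ + n₂ = n − 1, m₁ + m₂ = m, u ∈ {0,a}^{m₁}, w ∈ {0,b}^{m₂}, and the matrix [L 0; 0 R] (the first n−1 columns) contains the (n−1)-dimensional identity matrix as a submatrix. -/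
/-!
Put `r = a / b` and write the rows of `A` in coordinates `T` with respect to a set `B` of `n` rows
of determinant `±b`. Then every minor of `T` is `0`, `±1` or `±r` (`BasisRep.minor`). If `a = b = 1`
all of these are `0` or `±1` and the lower block can be taken empty, so let `r > 1`.

Since `r ≠ 2`, no minor has the form `±r ± 1` (`not_rVal_sub`), and `r` is not a root of a monic
quadratic with small integral coefficients. Hence the entries `±r` of `T` fill a rectangle of rank
one (`BasisRep.abs_eq_of_big`, `BasisRep.big_cross`). Choose `B` such that as many columns as
possible meet this rectangle. Then every minor of `T` avoiding these columns is `0` or `±1`, for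
otherwise pivoting would produce a further such column (`BasisRep.exists_max`).

The upper block consists of the rows that can be reached from the rectangle by walking along nonzero
entries of `T` outside the columns of the rectangle. A reachable row outside the rectangle vanishes
on the columns of the rectangle, since a shortest walk violating this closes up to a chordless cycle
whose determinant is `±r ± 1` (`BasisRep.upper_clean`, `det_cycle`). As the rectangle has rank one,
all of its columns but one, `j₀`, can be cleared in the upper block by column operations
(`BasisRep.blockForm`). The minors of `L` avoid the rectangle, so `L` is totally unimodular. A minor
of `R`, bordered by a row of the rectangle and the column `j₀`, gets multiplied by `±r`. It is an
integer, so it must be `0` or `±1`.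

Multiplying column `j₀` by `b` makes the matrix integral and the change of coordinates of
determinant `±1` (`BlockForm.exists_int`). That this change of coordinates is itself integral
follows from `gcd(a, b) = 1`, because the rows of `A` then generate `ℤⁿ` (`exists_int_of_coprime`).
-/

/-- `detSet A` is the set of absolute values of the `n × n` subdeterminants of `A`. -/
def detSet {m n : ℕ} (A : Matrix (Fin m) (Fin n) ℤ) : Set ℤ :=
  {d : ℤ | ∃ f : Fin n → Fin m, Function.Injective f ∧ d = |(A.submatrix f id).det|}

/-! ### Arithmetic of the value set `{0, ±1, ±r}` -/

/-- Up to sign, `x` is one of `0`, `1`, `r`. -/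
def RVal (r x : ℚ) : Prop := |x| = 0 ∨ |x| = 1 ∨ |x| = r

/-- The properties of `r = a / b` used below: `r > 1`, `r ≠ 2`, and `r` is not a root of a monic
integral quadratic polynomial with coefficients in `[-2, 2]`. -/
structure GoodRatio (r : ℚ) : Prop where
  one_lt : 1 < r
  ne_two : r ≠ 2
  sq_ne : ∀ e f : ℤ, |e| ≤ 2 → |f| ≤ 2 → r ^ 2 ≠ e * r + f

/-- A rational root of a monic integral polynomial is an integer, and an integer `r ≥ 3` is too
large to be a root of the quadratics in question. -/
lemma goodRatio_div {a b : ℤ} (hab : a > b) (hb : 0 < b) (hgcd : Int.gcd a b = 1)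
    (hne : ¬(a = 2 ∧ b = 1)) : GoodRatio ((a : ℚ) / b) := by
  have hbq : (0 : ℚ) < b := by exact_mod_cast hb
  refine ⟨?_, ?_, ?_⟩
  · rw [one_lt_div hbq]; exact_mod_cast hab
  · intro h
    rw [div_eq_iff hbq.ne'] at h
    have h' : a = 2 * b := by exact_mod_cast h
    subst h'
    simp only [Int.gcd_mul_left_left] at hgcd
    omega
  · intro e f he hf h
    rw [div_pow, ← sub_eq_zero] at h
    field_simp at h
    have h1 : a ^ 2 = b * (a * e + b * f) := by
      have : (a : ℚ) ^ 2 = b * (a * e + b * f) := by linarith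
      exact_mod_cast this
    have hcop : IsCoprime b (a ^ 2) :=
      (Int.isCoprime_iff_gcd_eq_one.2 (by rw [Int.gcd_comm]; exact hgcd)).pow_right
    have hunit : IsUnit b := hcop.isUnit_of_dvd' dvd_rfl ⟨_, h1⟩
    have hb1 : b = 1 := by rcases Int.isUnit_iff.1 hunit with h | h <;> omega
    subst hb1
    have ha : 3 ≤ a := by omega
    rw [abs_le] at he hf
    nlinarith

lemma RVal.mul_unit {r x e : ℚ} (h : RVal r x) (he : |e| = 1) : RVal r (x * e) := by
  unfold RVal at *; rw [abs_mul, he, mul_one]; exact h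

lemma RVal.linear {r x : ℚ} (hr : 0 < r) (h : RVal r x) :
    ∃ e f : ℤ, |e| ≤ 1 ∧ |f| ≤ 1 ∧ x = e * r + f := by
  rcases h with h | h | h
  · exact ⟨0, 0, by simp, by simp, by simpa using h⟩
  · rcases (abs_eq zero_le_one).1 h with h | h
    · exact ⟨0, 1, by simp, by simp, by simp [h]⟩
    · exact ⟨0, -1, by simp, by simp, by simp [h]⟩
  · rcases (abs_eq hr.le).1 h with h | h
    · exact ⟨1, 0, by simp, by simp, by simp [h]⟩
    · exact ⟨-1, 0, by simp, by simp, by simp [h]⟩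

/-- `±r ± 1` is never an admissible value, because `r ≠ 2`. -/
lemma not_rVal_sub {r p q : ℚ} (hr : GoodRatio r) (hp : |p| = r) (hq : |q| = 1) :
    ¬ RVal r (p - q) := by
  have h1 := hr.one_lt
  have h2 := hr.ne_two
  rintro (h | h | h) <;>
    rcases abs_cases p with ⟨h3, _⟩ | ⟨h3, _⟩ <;> rcases abs_cases q with ⟨h4, _⟩ | ⟨h4, _⟩ <;>
    rcases abs_cases (p - q) with ⟨h5, _⟩ | ⟨h5, _⟩ <;>
    first
      | (exfalso; linarith)
      | exact h2 (by linarith)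

/-- If `xz - yw` is admissible and `|x| = |z| = r`, the difference must vanish. -/
lemma rVal_rect {r x z y w : ℚ} (hr : GoodRatio r) (hx : |x| = r) (hz : |z| = r)
    (hy : RVal r y) (hw : RVal r w) (h : RVal r (x * z - y * w)) : x * z = y * w := by
  have h1 := hr.one_lt
  have hxz : |x * z| = r ^ 2 := by rw [abs_mul, hx, hz, sq]
  have key : |y * w| = r ^ 2 ∨ RVal r (y * w) := by
    unfold RVal
    rw [abs_mul]
    rcases hy with hy | hy | hy <;> rcases hw with hw | hw | hw <;> simp [hy, hw, sq]
  rcases key with key | key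
  · rcases abs_eq_abs.1 (hxz.trans key.symm) with h3 | h3
    · exact h3
    · exfalso
      have h4 : |x * z - y * w| = 2 * r ^ 2 := by
        rw [show x * z - y * w = 2 * (x * z) by linarith, abs_mul, hxz]; norm_num
      unfold RVal at h
      rw [h4] at h
      rcases h with h | h | h <;> nlinarith
  · exfalso
    obtain ⟨e, f, he, hf, h3⟩ := key.linear (by linarith)
    obtain ⟨e', f', he', hf', h4⟩ := h.linear (by linarith)
    rw [abs_le] at he hf he' hf'
    rcases (abs_eq (sq_nonneg r)).1 hxz with h5 | h5
    · refine hr.sq_ne (e + e') (f + f') (abs_le.2 ⟨?_, ?_⟩) (abs_le.2 ⟨?_, ?_⟩) ?_ <;>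
        first | omega | (push_cast; linarith)
    · refine hr.sq_ne (-(e + e')) (-(f + f')) (abs_le.2 ⟨?_, ?_⟩) (abs_le.2 ⟨?_, ?_⟩) ?_ <;>
        first | omega | (push_cast; linarith)

/-! ### Elementary column operations -/

/-- Right multiplication by `shear k y` adds `y j` times column `k` to column `j`, for every `j`
(including `j = k`). -/
def shear {n : ℕ} (k : Fin n) (y : Fin n → ℚ) : Matrix (Fin n) (Fin n) ℚ :=
  1 + Matrix.vecMulVec (Pi.single k 1) y

lemma det_shear {n : ℕ} (k : Fin n) (y : Fin n → ℚ) : (shear k y).det = 1 + y k := by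
  have := Matrix.det_one_add_replicateCol_mul_replicateRow (ι := Unit) (Pi.single k (1 : ℚ)) y
  rw [← Matrix.vecMulVec_eq] at this
  simpa [shear] using this

lemma mul_shear_apply {l : Type*} {n : ℕ} (T : Matrix l (Fin n) ℚ) (k : Fin n)
    (y : Fin n → ℚ) (v : l) (j : Fin n) : (T * shear k y) v j = T v j + T v k * y j := by
  simp [shear, Matrix.mul_add, Matrix.mul_vecMulVec, Matrix.vecMulVec_apply]

/-- Minors that contain column `k` are only rescaled by `shear k y`. -/
lemma det_mul_shear_submatrix {l : Type*} {n s : ℕ} (T : Matrix l (Fin n) ℚ) (q : Fin s)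
    (y : Fin n → ℚ) (f : Fin s → l) (g : Fin s → Fin n) :
    ((T * shear (g q) y).submatrix f g).det = (T.submatrix f g).det * (1 + y (g q)) := by
  have : (T * shear (g q) y).submatrix f g = T.submatrix f g * shear q (y ∘ g) := by
    ext i j
    simp [mul_shear_apply]
  rw [this, Matrix.det_mul, det_shear]
  rfl

/-! ### Representations with respect to a basis -/

/-- `T` represents the rows of `A` in coordinates where the rows `B` form the identity matrix, and
the change of coordinates has determinant `±δ`. -/
structure BasisRep {m n : ℕ} (A : Matrix (Fin m) (Fin n) ℚ) (δ : ℚ) (B : Fin n → Fin m)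
    (T : Matrix (Fin m) (Fin n) ℚ) : Prop where
  exists_mul : ∃ U : Matrix (Fin n) (Fin n) ℚ, |U.det| = δ ∧ T = A * U
  basis : T.submatrix B id = 1

section
variable {m n : ℕ} {A T : Matrix (Fin m) (Fin n) ℚ} {δ r : ℚ} {B : Fin n → Fin m}

lemma BasisRep.apply (h : BasisRep A δ B T) (i j : Fin n) : T (B i) j = if i = j then 1 else 0 := by
  have := congrFun (congrFun h.basis i) j
  simpa [Matrix.one_apply] using this

lemma BasisRep.det_full (h : BasisRep A δ B T)
    (hA : ∀ F : Fin n → Fin m, RVal r ((A.submatrix F id).det * δ)) (F : Fin n → Fin m) :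
    RVal r (T.submatrix F id).det := by
  obtain ⟨U, hU, rfl⟩ := h.exists_mul
  have h1 : (A * U).submatrix F id = A.submatrix F id * U := by
    rw [← Matrix.submatrix_mul_equiv A U F (Equiv.refl _) id]; rfl
  have := hA F
  unfold RVal at this ⊢
  rw [← hU] at this
  rw [h1, Matrix.det_mul]
  simpa only [abs_mul, abs_abs] using this

/-- Every minor of `T` is a full-size minor: complete the chosen rows by basis rows. -/
lemma BasisRep.exists_full (h : BasisRep A δ B T) {s : ℕ} (f : Fin s → Fin m) (g : Fin s → Fin n)
    (hg : Function.Injective g) :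
    ∃ F : Fin n → Fin m, (∀ c, (∀ q, g q ≠ c) → F c = B c) ∧
      (T.submatrix F id).det = (T.submatrix f g).det := by
  classical
  let F : Fin n → Fin m := fun c => if hc : ∃ q, g q = c then f hc.choose else B c
  have hFg : ∀ q, F (g q) = f q := by
    intro q
    have hc : ∃ q', g q' = g q := ⟨q, rfl⟩
    simp only [F, dif_pos hc]
    rw [hg hc.choose_spec]
  have hFn : ∀ c, (∀ q, g q ≠ c) → F c = B c := by
    intro c hc
    have : ¬ ∃ q, g q = c := by push Not; exact hc
    simp only [F, dif_neg this]
  refine ⟨F, hFn, ?_⟩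
  rw [Matrix.twoBlockTriangular_det _ (fun c => c ∈ Set.range g)]
  · have h1 : (Matrix.toSquareBlockProp (T.submatrix F id) fun i => ¬ i ∈ Set.range g) = 1 := by
      ext ⟨i, hi⟩ ⟨j, hj⟩
      have : F i = B i := hFn i (fun q hq => hi ⟨q, hq⟩)
      simp [Matrix.toSquareBlockProp, this, h.apply, Matrix.one_apply]
    rw [h1, Matrix.det_one, mul_one]
    have h2 := Matrix.det_submatrix_equiv_self (Equiv.ofInjective g hg)
      (Matrix.toSquareBlockProp (T.submatrix F id) fun c => c ∈ Set.range g)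
    convert! h2.symm using 2
    ext i j
    simp [Matrix.toSquareBlockProp, hFg]
  · intro i hi j hj
    have : F i = B i := hFn i (fun q hq => hi ⟨q, hq⟩)
    have hij : i ≠ j := fun e => hi (e ▸ hj)
    simp [this, h.apply, hij]

lemma BasisRep.minor (h : BasisRep A δ B T)
    (hA : ∀ F : Fin n → Fin m, RVal r ((A.submatrix F id).det * δ)) {s : ℕ}
    (f : Fin s → Fin m) (g : Fin s → Fin n) (hg : Function.Injective g) :
    RVal r (T.submatrix f g).det := by
  obtain ⟨F, -, hF⟩ := h.exists_full f g hg
  rw [← hF]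
  exact h.det_full hA F

lemma BasisRep.entry (h : BasisRep A δ B T)
    (hA : ∀ F : Fin n → Fin m, RVal r ((A.submatrix F id).det * δ)) (i : Fin m) (j : Fin n) :
    RVal r (T i j) := by
  have := h.minor hA ![i] ![j] (Function.injective_of_subsingleton _)
  rw [Matrix.det_fin_one] at this
  exact this

lemma BasisRep.two (h : BasisRep A δ B T)
    (hA : ∀ F : Fin n → Fin m, RVal r ((A.submatrix F id).det * δ)) (i i' : Fin m) {j j' : Fin n}
    (hj : j ≠ j') : RVal r (T i j * T i' j' - T i j' * T i' j) := by
  have := h.minor hA ![i, i'] ![j, j'] (by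
    intro x y hxy
    fin_cases x <;> fin_cases y <;> simp_all)
  rw [Matrix.det_fin_two] at this
  exact this

/-- Exchanging the basis row `B k` for a row `l` with `T l k = ±1`. -/
lemma BasisRep.pivot (h : BasisRep A δ B T) {l : Fin m} {k : Fin n} (hlk : |T l k| = 1) :
    BasisRep A δ (Function.update B k l)
      (T * shear k (fun j => if j = k then (T l k)⁻¹ - 1 else -T l j / T l k)) := by
  have h0 : T l k ≠ 0 := by
    intro h0
    rw [h0] at hlk
    simp at hlk
  obtain ⟨U, hU, hT⟩ := h.exists_mul
  refine ⟨⟨U * shear k _, ?_, by rw [← Matrix.mul_assoc, ← hT]⟩, ?_⟩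
  · rw [Matrix.det_mul, det_shear, abs_mul, hU, if_pos rfl, add_sub_cancel, abs_inv, hlk]; simp
  · ext i j
    rw [Matrix.submatrix_apply, mul_shear_apply]
    by_cases hi : i = k
    · subst hi
      by_cases hj : j = i
      · subst hj; simp [mul_sub, h0]
      · simp only [Function.update_self, id, if_neg hj, Matrix.one_apply, if_neg (Ne.symm hj)]
        field_simp
        ring
    · simp [h.apply, hi, Matrix.one_apply]

open Classical in
/-- The columns of `T` with an entry `±r`. -/
noncomputable def bigCols (r : ℚ) (T : Matrix (Fin m) (Fin n) ℚ) : Finset (Fin n) :=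
  Finset.univ.filter fun j => ∃ i, |T i j| = r

lemma mem_bigCols {j : Fin n} : j ∈ bigCols r T ↔ ∃ i, |T i j| = r := by
  simp [bigCols]

lemma BasisRep.entry_of_notMem (h : BasisRep A δ B T)
    (hA : ∀ F : Fin n → Fin m, RVal r ((A.submatrix F id).det * δ)) {i : Fin m} {j : Fin n}
    (hj : j ∉ bigCols r T) (h0 : T i j ≠ 0) : |T i j| = 1 := by
  rcases h.entry hA i j with h1 | h1 | h1
  · exact absurd (abs_eq_zero.1 h1) h0
  · exact h1
  · exact absurd (mem_bigCols.2 ⟨i, h1⟩) hj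

/-- A pivot outside the columns with entries `±r` does not destroy any such column. -/
lemma BasisRep.pivot_bigCols (hr : GoodRatio r) (h : BasisRep A δ B T)
    (hA : ∀ F : Fin n → Fin m, RVal r ((A.submatrix F id).det * δ)) {l : Fin m} {k : Fin n}
    (hlk : |T l k| = 1) (hk : k ∉ bigCols r T) :
    bigCols r T ⊆ bigCols r
      (T * shear k (fun j => if j = k then (T l k)⁻¹ - 1 else -T l j / T l k)) := by
  intro j hj
  have hjk : j ≠ k := fun e => hk (e ▸ hj)
  obtain ⟨i, hi⟩ := mem_bigCols.1 hj
  rw [mem_bigCols]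
  rcases h.entry hA l j with h1 | h1 | h1
  · refine ⟨i, ?_⟩
    rw [mul_shear_apply, if_neg hjk, abs_eq_zero.1 h1]
    simpa using hi
  · refine ⟨i, ?_⟩
    by_cases hik : T i k = 0
    · rw [mul_shear_apply, hik]; simpa using hi
    · -- otherwise the entry in row `i` would become `±r ± 1`
      exfalso
      have h3 := h.entry_of_notMem hA hk hik
      have h2 := (h.pivot hlk).entry hA i j
      rw [mul_shear_apply, if_neg hjk] at h2
      refine not_rVal_sub hr hi (q := T i k * T l j / T l k) ?_ ?_
      · rw [abs_div, abs_mul, h1, h3, hlk]; norm_num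
      · convert h2 using 1; ring
  · -- the former basis row `B k` receives an entry `±r`
    refine ⟨B k, ?_⟩
    rw [mul_shear_apply, if_neg hjk, h.apply, h.apply, if_neg (Ne.symm hjk), if_pos rfl]
    rw [zero_add, one_mul, abs_div, abs_neg, h1, hlk, div_one]

/-- A full-size minor `±r` whose rows contain all basis rows belonging to the columns with entries
`±r` can be used to enlarge the set of these columns. The induction is on the number of rows that
are not basis rows. -/
lemma BasisRep.enlarge (hr : GoodRatio r)
    (hA : ∀ F : Fin n → Fin m, RVal r ((A.submatrix F id).det * δ)) (N : ℕ) :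
    ∀ (B : Fin n → Fin m) (T : Matrix (Fin m) (Fin n) ℚ) (F : Fin n → Fin m), BasisRep A δ B T →
      (Finset.univ.filter fun c => F c ≠ B c).card ≤ N → (∀ c ∈ bigCols r T, F c = B c) →
      |(T.submatrix F id).det| = r →
      ∃ B' T', BasisRep A δ B' T' ∧ (bigCols r T).card < (bigCols r T').card := by
  induction N with
  | zero =>
    intro B T F h hN hF hdet
    exfalso
    have : F = B := by
      funext c
      by_contra hc
      have hmem : c ∈ Finset.univ.filter fun c => F c ≠ B c := by simp [hc]
      rw [Finset.card_eq_zero.1 (Nat.le_zero.1 hN)] at hmem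
      simp at hmem
    rw [this, h.basis, Matrix.det_one, abs_one] at hdet
    exact hr.one_lt.ne hdet
  | succ N ih =>
    intro B T F h hN hF hdet
    by_cases hFB : F = B
    · rw [hFB, h.basis, Matrix.det_one, abs_one] at hdet
      exact absurd hdet hr.one_lt.ne
    obtain ⟨q, hq⟩ : ∃ q, F q ≠ B q := by
      by_contra hc; push Not at hc; exact hFB (funext hc)
    have hqJ : q ∉ bigCols r T := fun hc => hq (hF q hc)
    obtain ⟨p, hp, hpq⟩ : ∃ p, F p ≠ B p ∧ T (F p) q ≠ 0 := by
      by_contra hc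
      push Not at hc
      have : (T.submatrix F id).det = 0 := by
        refine Matrix.det_eq_zero_of_column_eq_zero q fun c => ?_
        by_cases hcB : F c = B c
        · have : c ≠ q := fun e => hq (e ▸ hcB)
          simp [hcB, h.apply, this]
        · exact hc c hcB
      rw [this, abs_zero] at hdet
      linarith [hr.one_lt]
    have hpq1 := h.entry_of_notMem hA hqJ hpq
    have h' := h.pivot hpq1
    have hsub := h.pivot_bigCols hr hA hpq1 hqJ
    have hdet2 := det_mul_shear_submatrix T q
      (fun j => if j = q then (T (F p) q)⁻¹ - 1 else -T (F p) j / T (F p) q) F id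
    simp only [id, ↓reduceIte] at hdet2
    set T' := T * shear q (fun j => if j = q then (T (F p) q)⁻¹ - 1 else -T (F p) j / T (F p) q)
    rcases (Finset.card_le_card hsub).lt_or_eq with hlt | heq
    · exact ⟨_, _, h', hlt⟩
    have hJ : bigCols r T = bigCols r T' := Finset.eq_of_subset_of_card_le hsub heq.ge
    -- the rows are reordered so that the new basis row stands at position `q`
    have hne : ∀ c, (F ∘ Equiv.swap p q) c ≠ Function.update B q (F p) c →
        c ≠ q ∧ F c ≠ B c := by
      intro c hc
      have hcq : c ≠ q := by
        rintro rfl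
        simp at hc
      refine ⟨hcq, ?_⟩
      by_cases hcp : c = p
      · exact hcp ▸ hp
      · rw [Function.comp, Equiv.swap_apply_of_ne_of_ne hcp hcq, Function.update_of_ne hcq] at hc
        exact hc
    have := ih (Function.update B q (F p)) T' (F ∘ Equiv.swap p q) h' ?_ ?_ ?_
    · rw [hJ]; exact this
    · have hss : (Finset.univ.filter fun c => (F ∘ Equiv.swap p q) c ≠ Function.update B q (F p) c)
          ⊂ Finset.univ.filter fun c => F c ≠ B c := by
        rw [Finset.ssubset_iff_of_subset]
        · refine ⟨q, by simp [hq], by simp⟩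
        · intro c hc
          simp only [Finset.mem_filter, Finset.mem_univ, true_and] at hc ⊢
          exact (hne c hc).2
      have := Finset.card_lt_card hss
      omega
    · intro c hc
      by_contra hcon
      exact (hne c hcon).2 (hF c (hJ ▸ hc))
    · have e1 : T'.submatrix (F ∘ Equiv.swap p q) id
          = (T'.submatrix F id).submatrix (Equiv.swap p q) id := rfl
      rw [e1, Matrix.det_permute, hdet2, add_sub_cancel, abs_mul, abs_mul, hdet,
        abs_inv, hpq1]
      rcases Int.units_eq_one_or (Equiv.Perm.sign (Equiv.swap p q)) with hs | hs <;> simp [hs]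

/-- There is a representation all of whose minors avoiding the columns with entries `±r` are
`0` or `±1`: one with as many such columns as possible. -/
lemma BasisRep.exists_max (hr : GoodRatio r)
    (hA : ∀ F : Fin n → Fin m, RVal r ((A.submatrix F id).det * δ)) (h : BasisRep A δ B T) :
    ∃ B' T', BasisRep A δ B' T' ∧ ∀ F : Fin n → Fin m, (∀ c ∈ bigCols r T', F c = B' c) →
      |(T'.submatrix F id).det| ≠ r := by
  by_contra hcon
  push Not at hcon
  have key : ∀ N : ℕ, ∃ B' T', BasisRep A δ B' T' ∧ N ≤ (bigCols r T').card := by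
    intro N
    induction N with
    | zero => exact ⟨B, T, h, Nat.zero_le _⟩
    | succ N ih =>
      obtain ⟨B₁, T₁, h₁, hN⟩ := ih
      obtain ⟨F, hF, hd⟩ := hcon B₁ T₁ h₁
      obtain ⟨B₂, T₂, h₂, hlt⟩ := BasisRep.enlarge hr hA _ B₁ T₁ F h₁ le_rfl hF hd
      exact ⟨B₂, T₂, h₂, by omega⟩
  obtain ⟨B', T', -, hN⟩ := key (n + 1)
  have := Finset.card_le_univ (bigCols r T')
  rw [Fintype.card_fin] at this
  omega
end

/-! ### Separating the two blocks -/

section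
variable {m n : ℕ} {A T : Matrix (Fin m) (Fin n) ℚ} {δ r : ℚ} {B : Fin n → Fin m}

/-- The rows of `T` with an entry `±r`. -/
def bigRows (r : ℚ) (T : Matrix (Fin m) (Fin n) ℚ) : Set (Fin m) := {i | ∃ j, |T i j| = r}

/-- The entries `±r` fill a rectangle. -/
lemma BasisRep.abs_eq_of_big (hr : GoodRatio r) (h : BasisRep A δ B T)
    (hA : ∀ F : Fin n → Fin m, RVal r ((A.submatrix F id).det * δ)) {i : Fin m} {j : Fin n}
    (hi : i ∈ bigRows r T) (hj : j ∈ bigCols r T) : |T i j| = r := by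
  obtain ⟨j', hj'⟩ := hi
  obtain ⟨i', hi'⟩ := mem_bigCols.1 hj
  by_cases hjj : j' = j
  · rw [← hjj]; exact hj'
  have h1 := hr.one_lt
  have e := rVal_rect hr hj' hi' (h.entry hA i j) (h.entry hA i' j') (h.two hA i i' hjj)
  have e2 : r * r = |T i j| * |T i' j'| := by rw [← abs_mul, ← e, abs_mul, hj', hi']
  rcases h.entry hA i j with h3 | h3 | h3
  · rw [h3] at e2; nlinarith
  · rcases h.entry hA i' j' with h4 | h4 | h4 <;> rw [h3, h4] at e2 <;> nlinarith
  · exact h3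

/-- The rectangle of entries `±r` has rank one. -/
lemma BasisRep.big_cross (hr : GoodRatio r) (h : BasisRep A δ B T)
    (hA : ∀ F : Fin n → Fin m, RVal r ((A.submatrix F id).det * δ)) {i i' : Fin m} {j j' : Fin n}
    (hi : i ∈ bigRows r T) (hi' : i' ∈ bigRows r T) (hj : j ∈ bigCols r T)
    (hj' : j' ∈ bigCols r T) : T i j * T i' j' = T i j' * T i' j := by
  by_cases hjj : j = j'
  · rw [hjj]
  · exact rVal_rect hr (h.abs_eq_of_big hr hA hi hj) (h.abs_eq_of_big hr hA hi' hj')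
      (h.entry hA _ _) (h.entry hA _ _) (h.two hA i i' hjj)

/-- A walk of length `d` in the support of `T`, visiting the rows `p 0, …, p d` through the columns
`c 0, …, c (d - 1)`, that starts in a row with an entry `±r` and avoids all columns with such an
entry. Values of `p` and `c` beyond the length are irrelevant. -/
def IsRowPath (r : ℚ) (T : Matrix (Fin m) (Fin n) ℚ) (d : ℕ) (p : ℕ → Fin m) (c : ℕ → Fin n) :
    Prop :=
  p 0 ∈ bigRows r T ∧ ∀ t < d, c t ∉ bigCols r T ∧ T (p t) (c t) ≠ 0 ∧ T (p (t + 1)) (c t) ≠ 0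

/-- The rows of the upper block: those reachable by a walk as in `IsRowPath`. -/
def IsUpper (r : ℚ) (T : Matrix (Fin m) (Fin n) ℚ) (v : Fin m) : Prop :=
  ∃ d p c, IsRowPath r T d p c ∧ p d = v

lemma isUpper_of_big {v : Fin m} (hv : v ∈ bigRows r T) : IsUpper r T v := by
  by_cases hn : Nonempty (Fin n)
  · exact ⟨0, fun _ => v, fun _ => hn.some, ⟨hv, by simp⟩, rfl⟩
  · obtain ⟨j, -⟩ := hv
    exact absurd ⟨j⟩ hn

lemma IsUpper.step {v w : Fin m} {k : Fin n} (hv : IsUpper r T v) (hk : k ∉ bigCols r T)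
    (hvk : T v k ≠ 0) (hwk : T w k ≠ 0) : IsUpper r T w := by
  obtain ⟨d, p, c, ⟨h0, hp⟩, rfl⟩ := hv
  refine ⟨d + 1, fun t => if t ≤ d then p t else w, fun t => if t < d then c t else k,
    ⟨by simpa using h0, fun t ht => ?_⟩, by simp⟩
  rcases Nat.lt_succ_iff_lt_or_eq.1 ht with h1 | rfl
  · have h2 : t ≤ d := h1.le
    have h3 : t + 1 ≤ d := h1
    simpa [h1, h2, h3] using hp t h1
  · simpa using ⟨hk, hvk, hwk⟩

/-- The determinant of a path closed up to a cycle by its first column: only the two perfect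
matchings of the cycle contribute. -/
lemma det_cycle {d : ℕ} (hd : 0 < d) (M : Matrix (Fin (d + 1)) (Fin (d + 1)) ℚ)
    (h0 : ∀ i : Fin (d + 1), i ≠ 0 → i ≠ Fin.last d → M i 0 = 0)
    (hz : ∀ (i : Fin (d + 1)) (s : Fin d), (i : ℕ) ≠ s → (i : ℕ) ≠ s + 1 → M i s.succ = 0)
    (h1 : ∀ s : Fin d, |M s.castSucc s.succ| = 1) (h2 : ∀ s : Fin d, |M s.succ s.succ| = 1) :
    ∃ e e' : ℚ, |e| = 1 ∧ |e'| = 1 ∧ M.det = M 0 0 * e - M (Fin.last d) 0 * e' := by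
  have hprod : ∀ x : Fin d → ℚ, (∀ s, |x s| = 1) → |∏ s, x s| = 1 := by
    intro x hx
    rw [Finset.abs_prod]
    exact Finset.prod_eq_one fun s _ => hx s
  have hne : (0 : Fin (d + 1)) ≠ Fin.last d := by
    intro h
    have := congrArg Fin.val h
    simp at this
    omega
  have hU : (M.submatrix (Fin.succAbove 0) Fin.succ).det = ∏ s : Fin d, M s.succ s.succ := by
    rw [Matrix.det_of_isUpperTriangular]
    · simp
    · intro i j hij
      simp only [id] at hij
      have hij' : (j : ℕ) < i := hij
      simp only [Matrix.submatrix_apply, Fin.zero_succAbove]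
      exact hz _ _ (by simp; omega) (by simp; omega)
  have hL : (M.submatrix (Fin.succAbove (Fin.last d)) Fin.succ).det
      = ∏ s : Fin d, M s.castSucc s.succ := by
    rw [Matrix.det_of_isLowerTriangular]
    · simp
    · intro i j hij
      have hij' : (i : ℕ) < j := hij
      simp only [Matrix.submatrix_apply, Fin.succAbove_last]
      exact hz _ _ (by simp; omega) (by simp; omega)
  refine ⟨∏ s : Fin d, M s.succ s.succ, -((-1) ^ d * ∏ s : Fin d, M s.castSucc s.succ),
    hprod _ h2, ?_, ?_⟩
  · rw [abs_neg, abs_mul, hprod _ h1]; simp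
  · rw [Matrix.det_succ_column_zero,
      ← Finset.sum_subset (Finset.subset_univ {0, Fin.last d}), Finset.sum_pair hne, hU, hL]
    · simp; ring
    · intro i _ hi
      simp only [Finset.mem_insert, Finset.mem_singleton, not_or] at hi
      rw [h0 i hi.1 hi.2]; simp

/-- A row of the upper block without entries `±r` vanishes on all columns with such entries:
a shortest walk to a violating row would give a minor `±r ± 1`. -/
lemma BasisRep.upper_clean (hr : GoodRatio r) (h : BasisRep A δ B T)
    (hA : ∀ F : Fin n → Fin m, RVal r ((A.submatrix F id).det * δ)) {v : Fin m}
    (hv : IsUpper r T v) (hvI : v ∉ bigRows r T) {j : Fin n} (hj : j ∈ bigCols r T) :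
    T v j = 0 := by
  classical
  by_contra hvj
  have hex : ∃ d : ℕ, ∃ p c, IsRowPath r T d p c ∧ p d ∉ bigRows r T ∧
      ∃ j ∈ bigCols r T, T (p d) j ≠ 0 := by
    obtain ⟨d, p, c, hp, rfl⟩ := hv
    exact ⟨d, p, c, hp, hvI, j, hj, hvj⟩
  obtain ⟨d, ⟨p, c, ⟨hp0, hp⟩, hdI, k, hk, hdk⟩, hmin⟩ :
      ∃ d : ℕ, (∃ p c, IsRowPath r T d p c ∧ p d ∉ bigRows r T ∧
        ∃ j ∈ bigCols r T, T (p d) j ≠ 0) ∧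
        ∀ d' < d, ¬ ∃ p c, IsRowPath r T d' p c ∧ p d' ∉ bigRows r T ∧
          ∃ j ∈ bigCols r T, T (p d') j ≠ 0 :=
    ⟨Nat.find hex, Nat.find_spec hex, fun d' hd' => Nat.find_min hex hd'⟩
  have hd : 0 < d := by
    rcases Nat.eq_zero_or_pos d with rfl | h1
    · exact absurd hp0 hdI
    · exact h1
  -- by minimality the walk has no chords
  have hz : ∀ s ≤ d, ∀ t < d, s ≠ t → s ≠ t + 1 → T (p s) (c t) = 0 := by
    intro s hs t ht h1 h2
    by_contra hne
    rcases lt_or_gt_of_ne h1 with hlt | hgt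
    · refine hmin (d - (t - s)) (by omega) ⟨fun x => if x ≤ s then p x else p (x + (t - s)),
        fun x => if x < s then c x else c (x + (t - s)), ⟨by simpa using hp0, fun x hx => ?_⟩, ?_⟩
      · rcases lt_trichotomy x s with h3 | rfl | h3
        · have h4 : x ≤ s := h3.le
          have h5 : x + 1 ≤ s := h3
          simpa [h3, h4, h5] using hp x (by omega)
        · have h4 : x + (t - x) = t := by omega
          have h5 : x + 1 + (t - x) = t + 1 := by omega
          simpa [h4, h5] using ⟨(hp t ht).1, hne, (hp t ht).2.2⟩
        · have h4 : ¬ x ≤ s := by omega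
          have h5 : ¬ x + 1 ≤ s := by omega
          have h6 : ¬ x < s := by omega
          have h7 : x + 1 + (t - s) = x + (t - s) + 1 := by omega
          simp only [h4, h5, h6, h7, if_false]
          exact hp (x + (t - s)) (by omega)
      · have h4 : ¬ d - (t - s) ≤ s := by omega
        have h5 : d - (t - s) + (t - s) = d := by omega
        simp only [h4, h5, if_false]
        exact ⟨hdI, k, hk, hdk⟩
    · obtain ⟨w, rfl⟩ : ∃ w, s = t + 1 + w := ⟨s - (t + 1), by omega⟩
      refine hmin (d - w) (by omega) ⟨fun x => if x ≤ t then p x else p (x + w),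
        fun x => if x ≤ t then c x else c (x + w), ⟨by simpa using hp0, fun x hx => ?_⟩, ?_⟩
      · rcases lt_trichotomy x t with h3 | rfl | h3
        · have h4 : x ≤ t := h3.le
          have h5 : x + 1 ≤ t := h3
          simp only [h4, h5, if_true]
          exact hp x (by omega)
        · simpa using ⟨(hp x ht).1, (hp x ht).2.1, hne⟩
        · have h4 : ¬ x ≤ t := by omega
          have h5 : ¬ x + 1 ≤ t := by omega
          have h7 : x + 1 + w = x + w + 1 := by omega
          simp only [h4, h5, h7, if_false]
          exact hp (x + w) (by omega)
      · have h4 : ¬ d - w ≤ t := by omega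
        have h5 : d - w + w = d := by omega
        simp only [h4, h5, if_false]
        exact ⟨hdI, k, hk, hdk⟩
  have hint : ∀ s, 0 < s → s < d → T (p s) k = 0 := by
    intro s h0 hs
    by_contra hne
    by_cases hsI : p s ∈ bigRows r T
    · refine hmin (d - s) (by omega) ⟨fun x => p (x + s), fun x => c (x + s),
        ⟨by simpa using hsI, fun x hx => ?_⟩, ?_⟩
      · have h7 : x + 1 + s = x + s + 1 := by omega
        simp only [h7]
        exact hp (x + s) (by omega)
      · have h5 : d - s + s = d := by omega
        simp only [h5]
        exact ⟨hdI, k, hk, hdk⟩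
    · exact hmin s hs ⟨p, c, ⟨hp0, fun t ht => hp t (by omega)⟩, hsI, k, hk, hne⟩
  let g : Fin (d + 1) → Fin n := Fin.cons k fun s : Fin d => c s
  have hg : Function.Injective g := by
    rw [Fin.cons_injective_iff]
    refine ⟨?_, fun s t hst => ?_⟩
    · rintro ⟨s, hs⟩
      have hs' : c s = k := hs
      exact (hp s s.2).1 (hs'.symm ▸ hk)
    · by_contra hne
      simp only at hst
      rcases lt_or_gt_of_ne (fun e => hne (Fin.ext e) : (s : ℕ) ≠ t) with hlt | hgt
      · exact (hp s s.2).2.1 (hst ▸ hz s s.2.le t t.2 (by omega) (by omega))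
      · exact (hp t t.2).2.1 (hst ▸ hz t t.2.le s s.2 (by omega) (by omega))
  have hmin' := h.minor hA (fun i : Fin (d + 1) => p i) g hg
  have hdet := det_cycle hd (T.submatrix (fun i : Fin (d + 1) => p i) g)
    (by
      intro i hi0 hid
      refine hint i (Nat.pos_of_ne_zero fun e => hi0 (Fin.ext e)) ?_
      have : (i : ℕ) ≠ d := fun e => hid (Fin.ext e)
      omega)
    (fun i s h1 h2 => hz i (by omega) s s.2 h1 h2)
    (fun s => h.entry_of_notMem hA (hp s s.2).1 (hp s s.2).2.1)
    (fun s => h.entry_of_notMem hA (hp s s.2).1 (hp s s.2).2.2)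
  obtain ⟨e, e', he, he', hdet⟩ := hdet
  rw [hdet] at hmin'
  refine not_rVal_sub hr ?_ ?_ hmin'
  · rw [abs_mul, he, mul_one]
    exact h.abs_eq_of_big hr hA hp0 hk
  · rw [abs_mul, he', mul_one]
    simp only [Matrix.submatrix_apply, g, Fin.cons_zero, Fin.val_last]
    rcases h.entry hA (p d) k with h1 | h1 | h1
    · exact absurd (abs_eq_zero.1 h1) hdk
    · exact h1
    · exact absurd ⟨k, h1⟩ hdI
end

/-! ### The block form -/

/-- `W` has the block form `[L 0 u; 0 R w]` up to the order and signs of its rows and the order of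
its columns: `top` singles out the rows of the upper block, `left` the columns of `L`, and `j₀` is
the last column. -/
structure BlockForm {R : Type*} [CommRing R] [LinearOrder R] {m n : ℕ} (a b : R)
    (W : Matrix (Fin m) (Fin n) R) (top : Fin m → Prop) (left : Fin n → Prop) (j₀ : Fin n) :
    Prop where
  not_left : ¬ left j₀
  upper_zero : ∀ i j, top i → ¬ left j → j ≠ j₀ → W i j = 0
  lower_zero : ∀ i j, ¬ top i → left j → W i j = 0
  upper_last : ∀ i, top i → W i j₀ = 0 ∨ |W i j₀| = a
  lower_last : ∀ i, ¬ top i → W i j₀ = 0 ∨ |W i j₀| = b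
  upper_tu : ∀ (s : ℕ) (f : Fin s → Fin m) (g : Fin s → Fin n), Function.Injective g →
    (∀ i, top (f i)) → (∀ i, left (g i)) →
    (W.submatrix f g).det = 0 ∨ |(W.submatrix f g).det| = 1
  lower_tu : ∀ (s : ℕ) (f : Fin s → Fin m) (g : Fin s → Fin n), Function.Injective g →
    (∀ i, ¬ top (f i)) → (∀ i, ¬ left (g i) ∧ g i ≠ j₀) →
    (W.submatrix f g).det = 0 ∨ |(W.submatrix f g).det| = 1
  ident : ∃ B : Fin n → Fin m, ∀ i j, i ≠ j₀ → W (B i) j = if i = j then 1 else 0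

section
variable {m n : ℕ} {A T : Matrix (Fin m) (Fin n) ℚ} {δ r : ℚ} {B : Fin n → Fin m}

/-- For a representation as in `BasisRep.exists_max`, all columns with entries `±r` but one are
cleared in the upper block by column operations. -/
lemma BasisRep.blockForm (hr : GoodRatio r) (h : BasisRep A δ B T)
    (hA : ∀ F : Fin n → Fin m, RVal r ((A.submatrix F id).det * δ))
    (hmax : ∀ F : Fin n → Fin m, (∀ c ∈ bigCols r T, F c = B c) → |(T.submatrix F id).det| ≠ r)
    {j₀ : Fin n} (hj₀ : j₀ ∈ bigCols r T) :
    ∃ (U : Matrix (Fin n) (Fin n) ℚ) (top : Fin m → Prop) (left : Fin n → Prop),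
      |U.det| = δ ∧ BlockForm r 1 (A * U) top left j₀ := by
  classical
  have hr1 := hr.one_lt
  obtain ⟨i₀, hi₀⟩ := mem_bigCols.1 hj₀
  have hi₀I : i₀ ∈ bigRows r T := ⟨j₀, hi₀⟩
  have hne : T i₀ j₀ ≠ 0 := by
    intro e
    rw [e, abs_zero] at hi₀
    linarith
  obtain ⟨U, hU, hT⟩ := h.exists_mul
  let y : Fin n → ℚ := fun j => if j ∈ bigCols r T ∧ j ≠ j₀ then -T i₀ j / T i₀ j₀ else 0
  have hy0 : y j₀ = 0 := by simp [y]
  have hyn : ∀ j, j ∉ bigCols r T → y j = 0 := fun j hj => by simp [y, hj]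
  have hyJ : ∀ j, j ∈ bigCols r T → j ≠ j₀ → y j = -T i₀ j / T i₀ j₀ :=
    fun j hj hj' => by simp [y, hj, hj']
  have hyint : ∀ j, ∃ z : ℤ, y j = z := by
    intro j
    by_cases hj : j ∈ bigCols r T ∧ j ≠ j₀
    · have h1 : |y j| = 1 := by
        rw [hyJ j hj.1 hj.2, abs_div, abs_neg, hi₀, h.abs_eq_of_big hr hA hi₀I hj.1,
          div_self (by linarith)]
      rcases (abs_eq zero_le_one).1 h1 with h2 | h2
      · exact ⟨1, by simp [h2]⟩
      · exact ⟨-1, by simp [h2]⟩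
    · exact ⟨0, by simp only [y, if_neg hj, Int.cast_zero]⟩
  have hTint : ∀ i j, i ∉ bigRows r T → ∃ z : ℤ, T i j = z := by
    intro i j hi
    rcases h.entry hA i j with h1 | h1 | h1
    · exact ⟨0, by simpa using h1⟩
    · rcases (abs_eq zero_le_one).1 h1 with h2 | h2
      · exact ⟨1, by simp [h2]⟩
      · exact ⟨-1, by simp [h2]⟩
    · exact absurd ⟨j, h1⟩ hi
  have hD : ∀ i j, (T * shear j₀ y) i j = T i j + T i j₀ * y j := mul_shear_apply T j₀ y
  have hupper : ∀ i j, IsUpper r T i →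
      ¬ (j ∉ bigCols r T ∧ ∃ v, IsUpper r T v ∧ T v j ≠ 0) → j ≠ j₀ →
      (T * shear j₀ y) i j = 0 := by
    intro i j hi hj hjj
    rw [hD]
    by_cases hjJ : j ∈ bigCols r T
    · rw [hyJ j hjJ hjj]
      by_cases hiI : i ∈ bigRows r T
      · have := h.big_cross hr hA hiI hi₀I hjJ hj₀
        field_simp
        linarith
      · rw [h.upper_clean hr hA hi hiI hjJ, h.upper_clean hr hA hi hiI hj₀]; ring
    · have : T i j = 0 := by
        by_contra hne
        exact hj ⟨hjJ, i, hi, hne⟩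
      rw [this, hyn j hjJ]; ring
  refine ⟨U * shear j₀ y, IsUpper r T, fun k => k ∉ bigCols r T ∧ ∃ v, IsUpper r T v ∧ T v k ≠ 0,
    by rw [Matrix.det_mul, det_shear, hy0]; simpa using hU, ?_⟩
  rw [← Matrix.mul_assoc, ← hT]
  refine ⟨fun hc => hc.1 hj₀, hupper, ?_, ?_, ?_, ?_, ?_, B, ?_⟩
  · rintro i j hi ⟨hj, v, hv, hvj⟩
    rw [hD, hyn j hj, mul_zero, add_zero]
    by_contra hne
    exact hi (hv.step hj hvj hne)
  · intro i hi
    rw [hD, hy0, mul_zero, add_zero]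
    by_cases hiI : i ∈ bigRows r T
    · exact Or.inr (h.abs_eq_of_big hr hA hiI hj₀)
    · exact Or.inl (h.upper_clean hr hA hi hiI hj₀)
  · intro i hi
    rw [hD, hy0, mul_zero, add_zero]
    rcases h.entry hA i j₀ with h1 | h1 | h1
    · exact Or.inl (abs_eq_zero.1 h1)
    · exact Or.inr h1
    · exact absurd (isUpper_of_big ⟨j₀, h1⟩) hi
  · intro s f g hg hf hgl
    have e : (T * shear j₀ y).submatrix f g = T.submatrix f g := by
      ext i j
      simp [hD, hyn (g j) (hgl j).1]
    rw [e]
    obtain ⟨F, hF, hdet⟩ := h.exists_full f g hg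
    have h1 := hmax F fun c hc => hF c fun q hq => (hgl q).1 (hq ▸ hc)
    have h2 := h.minor hA f g hg
    rw [hdet] at h1
    rcases h2 with h2 | h2 | h2
    · exact Or.inl (abs_eq_zero.1 h2)
    · exact Or.inr h2
    · exact absurd h2 h1
  · intro s f g hg hf hgl
    -- bordering the minor by row `i₀` and column `j₀` multiplies it by `±r`
    have hg' : Function.Injective (Fin.cons j₀ g : Fin (s + 1) → Fin n) := by
      rw [Fin.cons_injective_iff]
      exact ⟨fun ⟨q, hq⟩ => (hgl q).2 hq, hg⟩
    have h1 := h.minor hA (Fin.cons i₀ f : Fin (s + 1) → Fin m) (Fin.cons j₀ g) hg'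
    have h2 := det_mul_shear_submatrix T (0 : Fin (s + 1)) y (Fin.cons i₀ f) (Fin.cons j₀ g)
    simp only [Fin.cons_zero, hy0, add_zero, mul_one] at h2
    rw [← h2, Matrix.det_succ_row_zero, Fin.sum_univ_succ, Finset.sum_eq_zero] at h1
    · have e : ((T * shear j₀ y).submatrix (Fin.cons i₀ f : Fin (s + 1) → Fin m)
          (Fin.cons j₀ g)).submatrix Fin.succ (Fin.succAbove 0)
          = (T * shear j₀ y).submatrix f g := by
        ext i j
        simp
      rw [e] at h1
      simp only [Fin.val_zero, pow_zero, one_mul, Matrix.submatrix_apply, Fin.cons_zero, add_zero,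
        hD i₀ j₀, hy0, mul_zero] at h1
      have hint : ∀ i j, ∃ z : ℤ, (T * shear j₀ y) (f i) (g j) = z := by
        intro i j
        have hfi : f i ∉ bigRows r T := fun hc => hf i (isUpper_of_big hc)
        obtain ⟨z₁, e₁⟩ := hTint (f i) (g j) hfi
        obtain ⟨z₂, e₂⟩ := hTint (f i) j₀ hfi
        obtain ⟨z₃, e₃⟩ := hyint (g j)
        exact ⟨z₁ + z₂ * z₃, by rw [hD, e₁, e₂, e₃]; push_cast; rfl⟩
      choose Z hZ using hint
      have hdet : ((T * shear j₀ y).submatrix f g).det = ((Matrix.of Z).det : ℤ) := by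
        rw [Int.cast_det]
        congr 1
        ext i j
        simp [hZ]
      rw [hdet] at h1 ⊢
      by_cases hz : (Matrix.of Z).det = 0
      · left; simp [hz]
      · right
        have hz1 : (1 : ℚ) ≤ |((Matrix.of Z).det : ℚ)| := by exact_mod_cast Int.one_le_abs hz
        unfold RVal at h1
        rw [abs_mul, hi₀] at h1
        rcases h1 with h1 | h1 | h1
        · nlinarith
        · nlinarith
        · exact mul_left_cancel₀ (by linarith : r ≠ 0) (by rw [h1, mul_one])
    · intro j _
      have : (T * shear j₀ y) i₀ (g j) = 0 :=
        hupper i₀ (g j) (isUpper_of_big hi₀I) (hgl j).1 (hgl j).2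
      simp [this]
  · intro i j hi
    rw [hD, h.apply, h.apply, if_neg hi]
    simp

/-- When all minors of the representation are `0` or `±1`, the lower block is empty. -/
lemma BasisRep.blockForm_one (h : BasisRep A δ B T)
    (hA : ∀ F : Fin n → Fin m, RVal 1 ((A.submatrix F id).det * δ)) (j₀ : Fin n) :
    ∃ (U : Matrix (Fin n) (Fin n) ℚ) (top : Fin m → Prop) (left : Fin n → Prop),
      |U.det| = δ ∧ BlockForm 1 1 (A * U) top left j₀ := by
  obtain ⟨U, hU, hT⟩ := h.exists_mul
  have hV : ∀ x : ℚ, RVal 1 x → x = 0 ∨ |x| = 1 := by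
    rintro x (h1 | h1 | h1)
    · exact Or.inl (abs_eq_zero.1 h1)
    · exact Or.inr h1
    · exact Or.inr h1
  refine ⟨U, fun _ => True, fun j => j ≠ j₀, hU, ?_⟩
  rw [← hT]
  refine ⟨by simp, fun i j _ h1 h2 => absurd h2 h1, by simp, fun i _ => hV _ (h.entry hA i j₀),
    by simp, fun s f g hg _ _ => hV _ (h.minor hA f g hg), fun s f g hg hf _ => ?_,
    B, fun i j _ => h.apply i j⟩
  rcases s with _ | s
  · simp
  · exact absurd trivial (hf 0)
end

/-! ### Integrality -/

/-- Clearing the denominator of the last column turns a rational block form into an integral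
one. -/
lemma BlockForm.exists_int {m n : ℕ} {a b : ℤ} (hb : 0 < b) {A : Matrix (Fin m) (Fin n) ℚ}
    {U : Matrix (Fin n) (Fin n) ℚ} {top : Fin m → Prop} {left : Fin n → Prop} {j₀ : Fin n}
    (h : BlockForm ((a : ℚ) / b) 1 (A * U) top left j₀) (hU : |U.det| = 1 / b) :
    ∃ (U' : Matrix (Fin n) (Fin n) ℚ) (W : Matrix (Fin m) (Fin n) ℤ), |U'.det| = 1 ∧
      A * U' = W.map (fun z => (z : ℚ)) ∧ BlockForm a b W top left j₀ := by
  have hbq : (0 : ℚ) < b := by exact_mod_cast hb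
  have habs : ∀ x : ℚ, (x = 0 ∨ |x| = 1) → ∃ z : ℤ, x = z := by
    rintro x (rfl | h1)
    · exact ⟨0, by simp⟩
    · rcases (abs_eq zero_le_one).1 h1 with h2 | h2
      · exact ⟨1, by simp [h2]⟩
      · exact ⟨-1, by simp [h2]⟩
  let y : Fin n → ℚ := fun j => if j = j₀ then (b : ℚ) - 1 else 0
  have hD0 : ∀ i, (A * (U * shear j₀ y)) i j₀ = b * (A * U) i j₀ := by
    intro i
    rw [← Matrix.mul_assoc, mul_shear_apply]
    simp only [y, if_true]; ring
  have hDn : ∀ i j, j ≠ j₀ → (A * (U * shear j₀ y)) i j = (A * U) i j := by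
    intro i j hj
    rw [← Matrix.mul_assoc, mul_shear_apply]
    simp only [y, if_neg hj]; ring
  have hlast : ∀ c : ℤ, ∀ x : ℚ, (x = 0 ∨ |x| = c / b) → ∃ z : ℤ, b * x = z := by
    rintro c x (rfl | h1)
    · exact ⟨0, by simp⟩
    · have h2 : |b * x| = c := by
        rw [abs_mul, h1, abs_of_pos hbq]; field_simp
      rcases abs_choice (b * x) with h3 | h3
      · exact ⟨c, by rw [← h3, h2]⟩
      · exact ⟨-c, by push_cast; linarith⟩
  have hint : ∀ i j, ∃ z : ℤ, (A * (U * shear j₀ y)) i j = z := by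
    intro i j
    by_cases hj : j = j₀
    · subst hj
      rw [hD0]
      by_cases hi : top i
      · exact hlast a _ (h.upper_last i hi)
      · exact hlast b _ (by rw [div_self hbq.ne']; exact h.lower_last i hi)
    · rw [hDn i j hj]
      by_cases hi : top i <;> by_cases hl : left j
      · have := h.upper_tu 1 ![i] ![j] (Function.injective_of_subsingleton _) (by simpa using hi)
          (by simpa using hl)
        rw [Matrix.det_fin_one] at this
        exact habs _ this
      · exact ⟨0, by simpa using h.upper_zero i j hi hl hj⟩
      · exact ⟨0, by simpa using h.lower_zero i j hi hl⟩
      · have := h.lower_tu 1 ![i] ![j] (Function.injective_of_subsingleton _) (by simpa using hi)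
          (by simpa using ⟨hl, hj⟩)
        rw [Matrix.det_fin_one] at this
        exact habs _ this
  choose Z hZ using hint
  have hZn : ∀ i j, j ≠ j₀ → ((Z i j : ℤ) : ℚ) = (A * U) i j := fun i j hj => by
    rw [← hZ, hDn i j hj]
  have hZ0 : ∀ i, ((Z i j₀ : ℤ) : ℚ) = b * (A * U) i j₀ := fun i => by rw [← hZ, hD0]
  have hdet : ∀ (s : ℕ) (f : Fin s → Fin m) (g : Fin s → Fin n), (∀ i, g i ≠ j₀) →
      ((((Matrix.of Z).submatrix f g).det : ℤ) : ℚ) = ((A * U).submatrix f g).det := by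
    intro s f g hg
    rw [Int.cast_det]
    congr 1
    ext i j
    simp [hZn _ _ (hg j)]
  refine ⟨U * shear j₀ y, Matrix.of Z, ?_, ?_, h.not_left, ?_, ?_, ?_, ?_, ?_, ?_, ?_⟩
  · rw [Matrix.det_mul, det_shear, abs_mul, hU]
    simp only [y, if_true]
    rw [add_sub_cancel, abs_of_pos hbq]; field_simp
  · ext i j
    simpa using hZ i j
  · intro i j hi hl hj
    have := h.upper_zero i j hi hl hj
    rw [← hZn i j hj] at this
    exact_mod_cast this
  · intro i j hi hl
    have hj : j ≠ j₀ := fun e => h.not_left (e ▸ hl)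
    have := h.lower_zero i j hi hl
    rw [← hZn i j hj] at this
    exact_mod_cast this
  · intro i hi
    rcases h.upper_last i hi with h1 | h1
    · left
      have := hZ0 i
      rw [h1, mul_zero] at this
      exact_mod_cast this
    · right
      have : |((Z i j₀ : ℤ) : ℚ)| = a := by
        rw [hZ0, abs_mul, h1, abs_of_pos hbq]; field_simp
      exact_mod_cast this
  · intro i hi
    rcases h.lower_last i hi with h1 | h1
    · left
      have := hZ0 i
      rw [h1, mul_zero] at this
      exact_mod_cast this
    · right
      have : |((Z i j₀ : ℤ) : ℚ)| = b := by
        rw [hZ0, abs_mul, h1, abs_of_pos hbq, mul_one]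
      exact_mod_cast this
  · intro s f g hg hf hgl
    have := h.upper_tu s f g hg hf hgl
    rw [← hdet s f g fun i e => h.not_left (e ▸ hgl i)] at this
    exact_mod_cast this
  · intro s f g hg hf hgl
    have := h.lower_tu s f g hg hf hgl
    rw [← hdet s f g fun i => (hgl i).2] at this
    exact_mod_cast this
  · obtain ⟨B, hB⟩ := h.ident
    refine ⟨B, fun i j hi => ?_⟩
    have h1 := hB i j hi
    by_cases hj : j = j₀
    · subst hj
      have h2 := hZ0 (B i)
      rw [h1, if_neg hi, mul_zero] at h2
      rw [if_neg hi]
      exact_mod_cast h2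
    · rw [← hZn _ j hj] at h1
      simp only [Matrix.of_apply]
      exact_mod_cast h1

/-- If two maximal minors of `A` are coprime, then the rows of `A` generate `ℤⁿ`, so a change of
coordinates taking them to integral vectors is integral. -/
lemma exists_int_of_coprime {m n : ℕ} (A W : Matrix (Fin m) (Fin n) ℤ)
    (U : Matrix (Fin n) (Fin n) ℚ)
    (hU : A.map (fun z => (z : ℚ)) * U = W.map (fun z => (z : ℚ))) (F G : Fin n → Fin m)
    (hFG : IsCoprime (A.submatrix F id).det (A.submatrix G id).det) :
    ∃ Q : Matrix (Fin n) (Fin n) ℤ, U = Q.map (fun z => (z : ℚ)) := by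
  let φ : ℤ →+* ℚ := Int.castRingHom ℚ
  have key : ∀ F : Fin n → Fin m, ((A.submatrix F id).det : ℚ) • U
      = ((A.submatrix F id).adjugate * W.submatrix F id).map φ := by
    intro F
    have h1 : (A.submatrix F id).map φ * U = (W.submatrix F id).map φ := by
      have := congrArg (fun M : Matrix (Fin m) (Fin n) ℚ => M.submatrix F id) hU
      simp only [Matrix.submatrix_mul _ _ F id id Function.bijective_id] at this
      exact this
    have h2 : (A.submatrix F id).adjugate.map φ * (A.submatrix F id).map φ
        = ((A.submatrix F id).det : ℚ) • (1 : Matrix (Fin n) (Fin n) ℚ) := by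
      rw [← Matrix.map_mul, Matrix.adjugate_mul]
      ext i j
      simp only [Matrix.map_apply, Matrix.smul_apply, smul_eq_mul, map_mul, Matrix.one_apply]
      split_ifs <;> simp [φ]
    rw [Matrix.map_mul, ← h1, ← Matrix.mul_assoc, h2, Matrix.smul_mul, Matrix.one_mul]
  obtain ⟨s, t, hst⟩ := hFG
  refine ⟨s • ((A.submatrix F id).adjugate * W.submatrix F id)
    + t • ((A.submatrix G id).adjugate * W.submatrix G id), ?_⟩
  ext i j
  have hF := congrFun (congrFun (key F) i) j
  have hG := congrFun (congrFun (key G) i) j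
  have hst' : (s : ℚ) * (A.submatrix F id).det + t * (A.submatrix G id).det = 1 := by
    exact_mod_cast hst
  simp only [Matrix.smul_apply, smul_eq_mul, Matrix.map_apply, φ, eq_intCast] at hF hG
  simp only [Matrix.map_apply, Matrix.add_apply, Matrix.smul_apply, smul_eq_mul, Int.cast_add,
    Int.cast_mul]
  rw [← hF, ← hG]
  linear_combination -(U i j) * hst'

/-! ### Existence of an integral block form -/

/-- A `{a,b,0}`-modular matrix is brought into block form by a unimodular matrix. -/
lemma exists_blockForm {a b : ℤ} {m n : ℕ} (hab : a ≥ b) (hb : 0 < b)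
    (hgcd : Int.gcd a b = 1) (hne : ¬(a = 2 ∧ b = 1)) (A : Matrix (Fin m) (Fin n) ℤ)
    (hmod : detSet A = {a, b, 0}) :
    ∃ (Q : Matrix (Fin n) (Fin n) ℤ) (top : Fin m → Prop) (left : Fin n → Prop) (j₀ : Fin n),
      (Q.det = 1 ∨ Q.det = -1) ∧ BlockForm a b (A * Q) top left j₀ := by
  classical
  have hbq : (0 : ℚ) < b := by exact_mod_cast hb
  have haq : (0 : ℚ) < a := by exact_mod_cast hb.trans_le hab
  have hn : 0 < n := by
    have h0 : (0 : ℤ) ∈ detSet A := by rw [hmod]; simp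
    obtain ⟨f, -, hf⟩ := h0
    rcases n with _ | n
    · simp at hf
    · omega
  have hval : ∀ F : Fin n → Fin m, (A.submatrix F id).det = 0 ∨ |(A.submatrix F id).det| = b ∨
      |(A.submatrix F id).det| = a := by
    intro F
    by_cases hF : Function.Injective F
    · have h1 : |(A.submatrix F id).det| ∈ detSet A := ⟨F, hF, rfl⟩
      rw [hmod] at h1
      rcases h1 with h1 | h1 | h1
      · exact Or.inr (Or.inr h1)
      · exact Or.inr (Or.inl h1)
      · exact Or.inl (abs_eq_zero.1 h1)
    · left
      simp only [Function.Injective, not_forall] at hF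
      obtain ⟨i, j, hij, hne⟩ := hF
      exact Matrix.det_zero_of_row_eq hne (by ext k; simp [hij])
  obtain ⟨Fa, -, hFa⟩ : a ∈ detSet A := by rw [hmod]; simp
  obtain ⟨Fb, -, hFb⟩ : b ∈ detSet A := by rw [hmod]; simp
  set A₀ : Matrix (Fin m) (Fin n) ℚ := A.map (fun z => (z : ℚ)) with hA₀
  have hcast : ∀ F : Fin n → Fin m, (A₀.submatrix F id).det = ((A.submatrix F id).det : ℚ) := by
    intro F
    rw [Int.cast_det]
    rfl
  have hA : ∀ F : Fin n → Fin m, RVal ((a : ℚ) / b) ((A₀.submatrix F id).det * (1 / b)) := by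
    intro F
    rw [hcast]
    unfold RVal
    rw [abs_mul, abs_of_pos (one_div_pos.2 hbq), ← Int.cast_abs]
    rcases hval F with h1 | h1 | h1
    · left; simp [h1]
    · right; left; rw [h1]; field_simp
    · right; right; rw [h1]; field_simp
  have hFb₀ : |(A₀.submatrix Fb id).det| = b := by
    rw [hcast, ← Int.cast_abs, ← hFb]
  have hFa₀ : |(A₀.submatrix Fa id).det| = a := by
    rw [hcast, ← Int.cast_abs, ← hFa]
  have hunit : IsUnit (A₀.submatrix Fb id).det := by
    rw [isUnit_iff_ne_zero]
    intro h
    rw [h, abs_zero] at hFb₀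
    exact hbq.ne hFb₀
  have hinit : BasisRep A₀ (1 / b) Fb (A₀ * (A₀.submatrix Fb id)⁻¹) := by
    refine ⟨⟨_, ?_, rfl⟩, ?_⟩
    · rw [Matrix.det_nonsing_inv, Ring.inverse_eq_inv', abs_inv, hFb₀, one_div]
    · rw [← Matrix.mul_nonsing_inv _ hunit]
      rfl
  obtain ⟨U, top, left, j₀, hU, hblock⟩ : ∃ (U : Matrix (Fin n) (Fin n) ℚ) (top : Fin m → Prop)
      (left : Fin n → Prop) (j₀ : Fin n), |U.det| = 1 / b ∧
        BlockForm ((a : ℚ) / b) 1 (A₀ * U) top left j₀ := by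
    rcases hab.lt_or_eq with hlt | heq
    · have hr := goodRatio_div hlt hb hgcd hne
      obtain ⟨B, T, h, hmax⟩ := hinit.exists_max hr hA
      have hbig : (bigCols ((a : ℚ) / b) T).Nonempty := by
        by_contra hemp
        rw [Finset.not_nonempty_iff_eq_empty] at hemp
        refine hmax Fa (by simp [hemp]) ?_
        obtain ⟨U, hU, rfl⟩ := h.exists_mul
        have e : (A₀ * U).submatrix Fa id = A₀.submatrix Fa id * U := rfl
        rw [e, Matrix.det_mul, abs_mul, hFa₀, hU]
        ring
      obtain ⟨j₀, hj₀⟩ := hbig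
      obtain ⟨U, top, left, hU, hblock⟩ := h.blockForm hr hA hmax hj₀
      exact ⟨U, top, left, j₀, hU, hblock⟩
    · have hr1 : (a : ℚ) / b = 1 := by rw [heq]; field_simp
      rw [hr1] at hA ⊢
      obtain ⟨U, top, left, hU, hblock⟩ := hinit.blockForm_one hA ⟨0, hn⟩
      exact ⟨U, top, left, _, hU, hblock⟩
  obtain ⟨U', W, hU', hW, hform⟩ := hblock.exists_int hb hU
  have hcop : IsCoprime (A.submatrix Fa id).det (A.submatrix Fb id).det := by
    rw [← IsCoprime.abs_abs_iff, ← hFa, ← hFb]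
    exact Int.isCoprime_iff_gcd_eq_one.2 hgcd
  obtain ⟨Q, rfl⟩ := exists_int_of_coprime A W U' hW Fa Fb hcop
  have hWQ : A * Q = W := by
    ext i j
    have := congrFun (congrFun hW i) j
    simp only [hA₀, Matrix.mul_apply, Matrix.map_apply] at this ⊢
    exact_mod_cast this
  refine ⟨Q, top, left, j₀, ?_, hWQ ▸ hform⟩
  have h1 : (Q.map (fun z => (z : ℚ))).det = (Q.det : ℚ) := (Int.cast_det Q).symm
  rw [h1] at hU'
  have h2 : |Q.det| = 1 := by exact_mod_cast hU'
  exact (abs_eq zero_le_one).1 h2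

/-! ### Ordering rows and columns -/

/-- Sorting by a key places the elements with small keys in an initial segment. -/
lemma exists_sort {n : ℕ} (κ : Fin n → ℕ) : ∃ σ : Equiv.Perm (Fin n), ∀ (c : ℕ) (i : Fin n),
    (i : ℕ) < (Finset.univ.filter fun j => κ j ≤ c).card ↔ κ (σ i) ≤ c := by
  refine ⟨Tuple.sort κ, fun c i => ?_⟩
  have h := Tuple.lt_card_le_iff_apply_le_of_monotone (f := κ ∘ Tuple.sort κ) (a := c)
    (j := i) (Tuple.monotone_sort κ)
  have hcard : (Finset.univ.filter fun j => κ j ≤ c).card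
      = (Finset.univ.filter fun j => (κ ∘ Tuple.sort κ) j ≤ c).card := by
    symm
    refine Finset.card_bij (fun j _ => Tuple.sort κ j) ?_ ?_ ?_
    · intro j hj
      simpa using hj
    · intro j _ k _ e
      exact (Tuple.sort κ).injective e
    · intro j hj
      exact ⟨(Tuple.sort κ).symm j, by simpa using hj, by simp⟩
  rw [hcard]
  exact h

/-! ### The decomposition -/

/-- Decomposition property for `{a,b,0}`-modular matrices: if `a ≥ b > 0`, `gcd(a,b) = 1`,
`(a,b) ≠ (2,1)` and `A ∈ ℤ^{m×n}` (`m ≥ n`, `rank A = n`) satisfies `D(A) = {a,b,0}`, then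
after multiplying by a `±1` diagonal matrix `E`, a permutation matrix `P` (given by a
permutation `σ`) and a unimodular matrix `Q`, the matrix `B = E·P·A·Q` has block form
`[L 0 u; 0 R w]` with `L`, `R` totally unimodular, `u ∈ {0,a}^{m₁}`, `w ∈ {0,b}^{m₂}`,
and the first `n-1` columns contain the `(n-1)`-identity matrix as a submatrix. -/
theorem stmt0 (a b : ℤ) (m n : ℕ) (hab : a ≥ b) (hb : 0 < b)
    (hgcd : Int.gcd a b = 1) (hne : ¬(a = 2 ∧ b = 1))
    (hmn : n ≤ m) (A : Matrix (Fin m) (Fin n) ℤ) (hrank : A.rank = n)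
    (hmod : detSet A = {a, b, 0}) :
    ∃ (m₁ m₂ n₁ n₂ : ℕ), m₁ + m₂ = m ∧ n₁ + n₂ = n - 1 ∧
    ∃ (σ : Equiv.Perm (Fin m)) (ε : Fin m → ℤ) (Q : Matrix (Fin n) (Fin n) ℤ),
      (∀ i, ε i = 1 ∨ ε i = -1) ∧ (Q.det = 1 ∨ Q.det = -1) ∧
      ∀ B : Matrix (Fin m) (Fin n) ℤ,
        B = Matrix.diagonal ε * (Matrix.of fun i j : Fin m => if σ i = j then (1 : ℤ) else 0)
              * A * Q →
        -- the two off-diagonal zero blocks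
        (∀ (i : Fin m) (j : Fin n), (i : ℕ) < m₁ → n₁ ≤ (j : ℕ) → (j : ℕ) < n - 1 → B i j = 0) ∧
        (∀ (i : Fin m) (j : Fin n), m₁ ≤ (i : ℕ) → (j : ℕ) < n₁ → B i j = 0) ∧
        -- the last column has entries in {0,a} (top block) and {0,b} (bottom block)
        (∀ (i : Fin m) (j : Fin n), (j : ℕ) = n - 1 → (i : ℕ) < m₁ → B i j = 0 ∨ B i j = a) ∧
        (∀ (i : Fin m) (j : Fin n), (j : ℕ) = n - 1 → m₁ ≤ (i : ℕ) → B i j = 0 ∨ B i j = b) ∧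
        -- the block L is totally unimodular
        (∀ (k : ℕ) (f : Fin k → Fin m) (g : Fin k → Fin n),
          Function.Injective f → Function.Injective g →
          (∀ i, (f i : ℕ) < m₁) → (∀ i, (g i : ℕ) < n₁) →
          (B.submatrix f g).det = 0 ∨ (B.submatrix f g).det = 1 ∨ (B.submatrix f g).det = -1) ∧
        -- the block R is totally unimodular
        (∀ (k : ℕ) (f : Fin k → Fin m) (g : Fin k → Fin n),
          Function.Injective f → Function.Injective g →
          (∀ i, m₁ ≤ (f i : ℕ)) → (∀ i, n₁ ≤ (g i : ℕ) ∧ (g i : ℕ) < n - 1) →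
          (B.submatrix f g).det = 0 ∨ (B.submatrix f g).det = 1 ∨ (B.submatrix f g).det = -1) ∧
        -- the first n-1 columns contain the (n-1)-dimensional identity as a submatrix
        (∃ (r : Fin (n - 1) → Fin m) (c : Fin (n - 1) → Fin n),
          Function.Injective r ∧ Function.Injective c ∧ (∀ j, (c j : ℕ) < n - 1) ∧
          ∀ j j', B (r j) (c j') = if j = j' then 1 else 0) := by
  classical
  obtain ⟨Q, top, left, j₀, hQ, hW⟩ := exists_blockForm hab hb hgcd hne A hmod
  set W := A * Q with hWdef
  obtain ⟨σ, hσ⟩ := exists_sort fun i : Fin m => if top i then 0 else 1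
  obtain ⟨τ, hτ⟩ := exists_sort fun j : Fin n => if left j then 0 else if j = j₀ then 2 else 1
  set m₁ := (Finset.univ.filter fun i : Fin m => (if top i then 0 else 1) ≤ 0).card
  set n₁ := (Finset.univ.filter fun j : Fin n =>
    (if left j then 0 else if j = j₀ then 2 else 1) ≤ 0).card
  have hrow : ∀ i : Fin m, (i : ℕ) < m₁ ↔ top (σ i) := by
    intro i
    rw [hσ 0 i]
    split_ifs with h <;> simp [h]
  have hcol : ∀ j : Fin n, (j : ℕ) < n₁ ↔ left (τ j) := by
    intro j
    rw [hτ 0 j]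
    split_ifs with h <;> simp [h]
  have hm₁ : m₁ ≤ m := (Finset.card_le_univ _).trans_eq (Fintype.card_fin m)
  have hcard : (Finset.univ.filter fun j : Fin n =>
      (if left j then 0 else if j = j₀ then 2 else 1) ≤ 1).card = n - 1 := by
    have e : (Finset.univ.filter fun j : Fin n =>
        (if left j then 0 else if j = j₀ then 2 else 1) ≤ 1) = Finset.univ.erase j₀ := by
      ext j
      have := hW.not_left
      simp only [Finset.mem_filter, Finset.mem_univ, true_and, Finset.mem_erase, and_true]
      split_ifs with h1 h2
      · simp only [zero_le_one, true_iff]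
        rintro rfl
        exact this h1
      · simp [h2]
      · simp [h2]
    rw [e, Finset.card_erase_of_mem (Finset.mem_univ _), Finset.card_univ, Fintype.card_fin]
  have hlast : ∀ j : Fin n, (j : ℕ) < n - 1 ↔ τ j ≠ j₀ := by
    intro j
    rw [← hcard, hτ 1 j]
    have := hW.not_left
    split_ifs with h1 h2
    · simp only [zero_le_one, true_iff]
      intro e
      exact this (e ▸ h1)
    · simp [h2]
    · simp [h2]
  have hn₁ : n₁ ≤ n - 1 := by
    rw [← hcard]
    exact Finset.card_le_card (Finset.monotone_filter_right _ fun j _ h => le_trans h zero_le_one)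
  let ε : Fin m → ℤ := fun i => if W (σ i) j₀ < 0 then -1 else 1
  have hε : ∀ i, ε i = 1 ∨ ε i = -1 := by
    intro i
    simp only [ε]
    split_ifs <;> simp
  have hεabs : ∀ i, ε i * W (σ i) j₀ = |W (σ i) j₀| := by
    intro i
    simp only [ε]
    split_ifs with h
    · rw [abs_of_neg h]; ring
    · rw [abs_of_nonneg (not_lt.1 h)]; ring
  refine ⟨m₁, m - m₁, n₁, n - 1 - n₁, by omega, by omega, σ, ε, Q.submatrix id τ, hε, ?_, ?_⟩
  · rw [Matrix.det_permute']
    rcases Int.units_eq_one_or (Equiv.Perm.sign τ) with h | h <;> rcases hQ with h' | h' <;>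
      simp [h, h']
  intro B hB
  have hBW : ∀ i j, B i j = ε i * W (σ i) (τ j) := by
    intro i j
    have h1 : (Matrix.of fun i j : Fin m => if σ i = j then (1 : ℤ) else 0) * A
        = A.submatrix σ id := by
      ext i j
      simp [Matrix.mul_apply]
    have h2 : A.submatrix σ id * Q.submatrix id τ = W.submatrix σ τ := rfl
    rw [hB, Matrix.mul_assoc (Matrix.diagonal ε), h1, Matrix.mul_assoc, h2, Matrix.diagonal_mul]
    rfl
  have hminor : ∀ (k : ℕ) (f : Fin k → Fin m) (g : Fin k → Fin n),
      ((W.submatrix (σ ∘ f) (τ ∘ g)).det = 0 ∨ |(W.submatrix (σ ∘ f) (τ ∘ g)).det| = 1) →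
      (B.submatrix f g).det = 0 ∨ (B.submatrix f g).det = 1 ∨ (B.submatrix f g).det = -1 := by
    intro k f g h
    have e : B.submatrix f g = Matrix.diagonal (ε ∘ f) * W.submatrix (σ ∘ f) (τ ∘ g) := by
      ext i j
      simp [Matrix.diagonal_mul, hBW]
    have hprod : |∏ i, (ε ∘ f) i| = 1 := by
      rw [Finset.abs_prod]
      refine Finset.prod_eq_one fun i _ => ?_
      rcases hε (f i) with h | h <;> simp [h]
    rw [e, Matrix.det_mul, Matrix.det_diagonal]
    rcases h with h | h
    · left; rw [h, mul_zero]
    · right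
      rw [← abs_eq zero_le_one, abs_mul, hprod, h, one_mul]
  have hj : ∀ j : Fin n, (j : ℕ) = n - 1 → τ j = j₀ := by
    intro j hj
    by_contra h
    have := (hlast j).2 h
    omega
  refine ⟨?_, ?_, ?_, ?_, ?_, ?_, ?_⟩
  · intro i j hi hj hj'
    rw [hBW, hW.upper_zero _ _ ((hrow i).1 hi) (fun h => absurd ((hcol j).2 h) (not_lt.2 hj))
      ((hlast j).1 hj'), mul_zero]
  · intro i j hi hj
    rw [hBW, hW.lower_zero _ _ (fun h => absurd ((hrow i).2 h) (not_lt.2 hi)) ((hcol j).1 hj),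
      mul_zero]
  · intro i j hjn hi
    rw [hBW, hj j hjn, hεabs]
    exact (hW.upper_last _ ((hrow i).1 hi)).imp abs_eq_zero.2 id
  · intro i j hjn hi
    rw [hBW, hj j hjn, hεabs]
    exact (hW.lower_last _ (fun h => absurd ((hrow i).2 h) (not_lt.2 hi))).imp abs_eq_zero.2 id
  · intro k f g _ hg hfi hgi
    exact hminor k f g (hW.upper_tu k _ _ (τ.injective.comp hg) (fun i => (hrow _).1 (hfi i))
      fun i => (hcol _).1 (hgi i))
  · intro k f g _ hg hfi hgi
    exact hminor k f g (hW.lower_tu k _ _ (τ.injective.comp hg)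
      (fun i h => absurd ((hrow _).2 h) (not_lt.2 (hfi i)))
      fun i => ⟨fun h => absurd ((hcol _).2 h) (not_lt.2 (hgi i).1), (hlast _).1 (hgi i).2⟩)
  · obtain ⟨I, hI⟩ := hW.ident
    let c : Fin (n - 1) → Fin n := Fin.castLE (Nat.sub_le n 1)
    have hc : Function.Injective c := Fin.castLE_injective _
    have hcne : ∀ j, τ (c j) ≠ j₀ := fun j => (hlast _).1 j.isLt
    have hpat : ∀ j j', B (σ.symm (I (τ (c j)))) (c j') = if j = j' then 1 else 0 := by
      intro j j'
      -- these rows vanish in the last column, so their sign is `+1`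
      have hs : ε (σ.symm (I (τ (c j)))) = 1 := by
        simp only [ε, Equiv.apply_symm_apply, hI _ j₀ (hcne j), if_neg (hcne j)]
        simp
      rw [hBW, hs, one_mul, Equiv.apply_symm_apply, hI _ _ (hcne j)]
      simp only [EmbeddingLike.apply_eq_iff_eq, hc.eq_iff]
    refine ⟨fun j => σ.symm (I (τ (c j))), c, ?_, hc, fun j => j.isLt, hpat⟩
    intro j j' e
    have h1 := hpat j j'
    have h2 := hpat j' j'
    simp only at e
    rw [e, h2, if_pos rfl] at h1
    by_contra hne'
    rw [if_neg hne'] at h1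
    exact one_ne_zero h1
end

section
/- Let a > b > 0 be integers with 2·b ≠ a. Let A ∈ ℤ^{m×n} with m ≥ n and rank(A) = n be {a,b,0}-modular such that: all entries of the first n−1 columns of A lie in {0, 1, −1}; all entries of the n-th column of A lie in {0, a, b}, with at least one entry equal to a and at least one entry equal to b; and the rows of A include the unit vectors e₁, …, e_{n−1} ∈ ℤ^n. Then there exist a permutation matrix P ∈ {0,1}^{m×m} and a permutation matrix Π ∈ {0,1}^{n×n} fixing the n-th coordinate such that P·A·Π has the block form [L 0 u; 0 R w], where L ∈ ℤ^{m₁×n₁} and R ∈ ℤ^{m₂×n₂} have all entries in {0, 1, −1}, n₁ + n₂ = n − 1, m₁ + m₂ = m, u ∈ {0,a}^{m₁}, and w ∈ {0,b}^{m₂}; in particular, every row whose n-th entry equals a lies in the top block and every row whose n-th entry equals b lies in the bottom block. -/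
/-- If column `j` of `P` vanishes off row `j`, then the determinant depends on row `j` only through
its `j`-th entry. -/
lemma det_updateRow_of_col {n : ℕ} (P : Matrix (Fin n) (Fin n) ℤ) (j : Fin n) (r : Fin n → ℤ)
    (h : ∀ x, x ≠ j → P x j = 0) :
    (P.updateRow j r).det = r j * (P.updateRow j (Pi.single j 1)).det := by
  have hr : r = r j • Pi.single j 1 + (r - r j • Pi.single j 1) := by abel
  have h0 : (P.updateRow j (r - r j • Pi.single j 1)).det = 0 := by
    apply Matrix.det_eq_zero_of_column_eq_zero j
    intro x
    by_cases hx : x = j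
    · subst hx; simp
    · simp [Matrix.updateRow_ne hx, h x hx]
  conv_lhs => rw [hr]
  rw [Matrix.det_updateRow_add, Matrix.det_updateRow_smul, h0, add_zero]

/-- Exchange formula: the effect on the linear functional `ρ ↦ det (N with row l := ρ)` of replacing
the unit row `e_j` of `N` by `r`, when column `j` is zero in all rows other than `j` and `l`. -/
lemma det_exchange {n : ℕ} (N : Matrix (Fin n) (Fin n) ℤ) (j l : Fin n) (hjl : j ≠ l)
    (hrow : N j = Pi.single j 1) (hcol : ∀ x, x ≠ j → x ≠ l → N x j = 0)
    (r ρ : Fin n → ℤ) (hr : r j = 1 ∨ r j = -1) :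
    ((N.updateRow j r).updateRow l ρ).det =
      r j * (N.updateRow l ρ).det - ρ j * (N.updateRow l r).det := by
  have hsq : r j * r j = 1 := by rcases hr with h | h <;> simp [h]
  -- Subtracting a multiple of `r` from `ρ` clears column `j` outside row `j`.
  set k : ℤ := r j * ρ j with hk
  set τ : Fin n → ℤ := ρ - k • r with hτ
  have hρ : ρ = τ + k • r := by simp [hτ]
  have hτj : τ j = 0 := by
    simp only [hτ, hk, Pi.sub_apply, Pi.smul_apply, smul_eq_mul]
    linear_combination (-ρ j) * hsq
  have hrr : ((N.updateRow j r).updateRow l r).det = 0 := by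
    apply Matrix.det_zero_of_row_eq hjl
    rw [Matrix.updateRow_self, Matrix.updateRow_ne hjl, Matrix.updateRow_self]
  have e1 : ((N.updateRow j r).updateRow l ρ).det = ((N.updateRow j r).updateRow l τ).det := by
    conv_lhs => rw [hρ]
    rw [Matrix.det_updateRow_add, Matrix.det_updateRow_smul, hrr, mul_zero, add_zero]
  have e2 : (N.updateRow j r).updateRow l τ = (N.updateRow l τ).updateRow j r := by
    ext x y
    by_cases h1 : x = j
    · subst h1; simp [Matrix.updateRow_apply, hjl]
    · simp [Matrix.updateRow_apply, h1]
  have e3 : (N.updateRow l τ).updateRow j (Pi.single j 1) = N.updateRow l τ := by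
    ext x y
    by_cases h1 : x = j
    · subst h1; simp [Matrix.updateRow_apply, hjl, hrow]
    · simp [Matrix.updateRow_apply, h1]
  have e4 : (N.updateRow l ρ).det = (N.updateRow l τ).det + k * (N.updateRow l r).det := by
    conv_lhs => rw [hρ]
    rw [Matrix.det_updateRow_add, Matrix.det_updateRow_smul]
  rw [e1, e2, det_updateRow_of_col _ j r, e3, e4, hk]
  · linear_combination (-ρ j * (N.updateRow l r).det) * hsq
  · intro x hx
    by_cases hxl : x = l
    · subst hxl; simpa using hτj
    · rw [Matrix.updateRow_ne hxl]; exact hcol x hx hxl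

/-- The columns other than `l` met by a row at distance less than `t` from the rows whose entry in
column `l` is `a`. -/
def reachCols {m n : ℕ} (A : Matrix (Fin m) (Fin n) ℤ) (l : Fin n) (a : ℤ) : ℕ → Set (Fin n)
  | 0 => ∅
  | t + 1 => {j | j ≠ l ∧ ∃ r, (A r l = a ∨ ∃ k ∈ reachCols A l a t, A r k ≠ 0) ∧ A r j ≠ 0}

/-- The rows at distance at most `t` from the rows whose entry in column `l` is `a`. -/
def reachRows {m n : ℕ} (A : Matrix (Fin m) (Fin n) ℤ) (l : Fin n) (a : ℤ) (t : ℕ) :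
    Set (Fin m) :=
  {r | A r l = a ∨ ∃ k ∈ reachCols A l a t, A r k ≠ 0}

/-- A chain from a row with last entry `a` up to `r` (meant for rows `r` at distance exactly `t`),
encoded by its determinant. The rows preceding `r`, all at distance less than `t`, and unit rows for
the remaining columns make up the rows `f j`, `j ≠ l`; the row at `l` is left free. As a functional
of that row, the determinant is `±` the `l`-th coordinate on vectors vanishing on
`reachCols A l a t`, and takes the value `±a` at `r`. The last clause says that columns not yet
reached still carry their unit row and no other nonzero entry off row `l`. -/
def HasChain {m n : ℕ} (A : Matrix (Fin m) (Fin n) ℤ) (l : Fin n) (a : ℤ) (t : ℕ)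
    (r : Fin m) : Prop :=
  ∃ (f : Fin n → Fin m) (s ε : ℤ), (s = 1 ∨ s = -1) ∧ (ε = 1 ∨ ε = -1) ∧
    (∀ ρ : Fin n → ℤ, (∀ j ∈ reachCols A l a t, ρ j = 0) →
      ((A.submatrix f id).updateRow l ρ).det = s * ρ l) ∧
    ((A.submatrix f id).updateRow l (A r)).det = ε * a ∧
    ∀ j, j ≠ l → j ∉ reachCols A l a t →
      A (f j) = Pi.single j 1 ∧ ∀ x, x ≠ l → x ≠ j → A (f x) j = 0

section Chain

variable {m n : ℕ} {A : Matrix (Fin m) (Fin n) ℤ} {l : Fin n} {a b : ℤ}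

lemma reachCols_ne {t : ℕ} {j : Fin n} (h : j ∈ reachCols A l a t) : j ≠ l := by
  cases t with
  | zero => exact absurd h (by simp [reachCols])
  | succ t => exact h.1

lemma mem_reachCols_succ {t : ℕ} {j : Fin n} {r : Fin m} (hj : j ≠ l)
    (hr : r ∈ reachRows A l a t) (h : A r j ≠ 0) : j ∈ reachCols A l a (t + 1) :=
  ⟨hj, r, hr, h⟩

lemma reachCols_mono {u : Fin n → Fin m} (hu : ∀ j, j ≠ l → A (u j) = Pi.single j 1) {t : ℕ}
    {j : Fin n} (h : j ∈ reachCols A l a t) : j ∈ reachCols A l a (t + 1) :=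
  have hj : A (u j) j ≠ 0 := by simp [hu j (reachCols_ne h)]
  mem_reachCols_succ (reachCols_ne h) (Or.inr ⟨j, h, hj⟩) hj

/-- A row first reached at distance `t + 1` shares a new column with a row first reached at
distance `t`. -/
lemma exists_pred {t : ℕ} {r' : Fin m} (h : r' ∈ reachRows A l a (t + 1))
    (h' : r' ∉ reachRows A l a t) :
    ∃ r j, r ∈ reachRows A l a t ∧ (∀ i ∈ reachCols A l a t, A r' i = 0) ∧ j ≠ l ∧
      j ∉ reachCols A l a t ∧ j ∈ reachCols A l a (t + 1) ∧ A r j ≠ 0 ∧ A r' j ≠ 0 ∧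
      ∀ k, t = k + 1 → r ∉ reachRows A l a k := by
  have hz : ∀ i ∈ reachCols A l a t, A r' i = 0 := by
    intro i hi
    by_contra hne
    exact h' (Or.inr ⟨i, hi, hne⟩)
  rcases h with h | ⟨j, hj, hne⟩
  · exact absurd (Or.inl h) h'
  have hjt : j ∉ reachCols A l a t := fun hh => hne (hz j hh)
  obtain ⟨hjl, r, hr, hrj⟩ := id hj
  refine ⟨r, j, hr, hz, hjl, hjt, hj, hrj, hne, ?_⟩
  rintro k rfl hrk
  exact hjt (mem_reachCols_succ hjl hrk hrj)

/-- One step of the chain: replacing the unit row of a new column `j` by the row `r` that meets it.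
For a vector `ρ` vanishing on `reachCols A l a t`, the determinant is then `±ρ l ± a * ρ j`. -/
lemma extend_chain (hsm : ∀ i j, j ≠ l → A i j = 0 ∨ A i j = 1 ∨ A i j = -1)
    {u : Fin n → Fin m} (hu : ∀ j, j ≠ l → A (u j) = Pi.single j 1)
    {t : ℕ} {r : Fin m} {j : Fin n} (hc : HasChain A l a t r)
    (hr : r ∈ reachRows A l a t) (hjl : j ≠ l) (hjt : j ∉ reachCols A l a t)
    (hrj : A r j ≠ 0) :
    ∃ (f : Fin n → Fin m) (s ε : ℤ), (s = 1 ∨ s = -1) ∧ (ε = 1 ∨ ε = -1) ∧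
      (∀ ρ : Fin n → ℤ, (∀ i ∈ reachCols A l a t, ρ i = 0) →
        ((A.submatrix f id).updateRow l ρ).det = s * ρ l + ε * a * ρ j) ∧
      ∀ i, i ≠ l → i ∉ reachCols A l a (t + 1) →
        A (f i) = Pi.single i 1 ∧ ∀ x, x ≠ l → x ≠ i → A (f x) i = 0 := by
  obtain ⟨f, s, ε, hs, hε, hlin, hval, hunit⟩ := hc
  have hrj1 : A r j = 1 ∨ A r j = -1 := (hsm r j hjl).resolve_left hrj
  have hj1 : j ∈ reachCols A l a (t + 1) := mem_reachCols_succ hjl hr hrj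
  refine ⟨Function.update f j r, A r j * s, -ε, ?_, ?_, ?_, ?_⟩
  · rcases hrj1 with h | h <;> rcases hs with h' | h' <;> simp [h, h']
  · rcases hε with h | h <;> simp [h]
  · intro ρ hρ
    have e : A.submatrix (Function.update f j r) id = (A.submatrix f id).updateRow j (A r) := by
      ext x y
      by_cases hx : x = j
      · subst hx; simp
      · simp [Matrix.updateRow_apply, hx]
    obtain ⟨h1, h2⟩ := hunit j hjl hjt
    rw [e, det_exchange (A.submatrix f id) j l hjl h1 (fun x hx hxl => h2 x hxl hx) (A r) ρ hrj1,
      hlin ρ hρ, hval]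
    ring
  · intro i hil hi
    have hij : i ≠ j := fun h => hi (h ▸ hj1)
    obtain ⟨h1, h2⟩ := hunit i hil (fun h => hi (reachCols_mono hu h))
    refine ⟨by rw [Function.update_of_ne hij]; exact h1, fun x hxl hxi => ?_⟩
    by_cases hx : x = j
    · subst hx
      rw [Function.update_self]
      by_contra hne
      exact hi (mem_reachCols_succ hil hr hne)
    · rw [Function.update_of_ne hx]; exact h2 x hxl hxi

/-- Every row first reached at distance `t` ends a chain, provided no row with last entry `b` is
reached earlier or at the same distance. -/
lemma exists_chain (hsm : ∀ i j, j ≠ l → A i j = 0 ∨ A i j = 1 ∨ A i j = -1)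
    (hcol : ∀ i, A i l = 0 ∨ A i l = a ∨ A i l = b)
    {u : Fin n → Fin m} (hu : ∀ j, j ≠ l → A (u j) = Pi.single j 1) (t : ℕ) :
    (∀ r ∈ reachRows A l a t, A r l ≠ b) → ∀ r ∈ reachRows A l a t,
      (∀ k, t = k + 1 → r ∉ reachRows A l a k) → HasChain A l a t r := by
  induction t with
  | zero =>
    intro _ r hr _
    have hra : A r l = a := by simpa [reachRows, reachCols] using hr
    have hdet : ∀ ρ : Fin n → ℤ, ((A.submatrix u id).updateRow l ρ).det = ρ l := by
      intro ρ
      have e : (A.submatrix u id).updateRow l ρ = (1 : Matrix (Fin n) (Fin n) ℤ).updateRow l ρ := by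
        ext x y
        by_cases hx : x = l
        · subst hx; simp
        · rw [Matrix.updateRow_ne hx, Matrix.updateRow_ne hx]
          simp [hu x hx, Pi.single_apply, Matrix.one_apply, eq_comm]
      have e1 : (1 : Matrix (Fin n) (Fin n) ℤ).updateRow l (Pi.single l 1) = 1 := by
        ext x y
        by_cases hx : x = l
        · subst hx; simp [Pi.single_apply, Matrix.one_apply, eq_comm]
        · rw [Matrix.updateRow_ne hx]
      rw [e, det_updateRow_of_col _ l ρ (fun x hx => by simp [hx]), e1]
      simp
    refine ⟨u, 1, 1, Or.inl rfl, Or.inl rfl, fun ρ _ => by rw [hdet, one_mul],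
      by rw [hdet, hra, one_mul], fun j hj _ => ⟨hu j hj, fun x hxl hxj => ?_⟩⟩
    simp [hu x hxl, Ne.symm hxj]
  | succ t ih =>
    intro hnb r' hr' hnew
    obtain ⟨r, j, hr, hz, hjl, hjt, hj1, hrj, hr'j, hpred⟩ := exists_pred hr' (hnew t rfl)
    have hsub : ∀ q ∈ reachRows A l a t, q ∈ reachRows A l a (t + 1) := by
      rintro q (hq | ⟨k, hk, hq⟩)
      · exact Or.inl hq
      · exact Or.inr ⟨k, reachCols_mono hu hk, hq⟩
    have hc := ih (fun q hq => hnb q (hsub q hq)) r hr hpred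
    obtain ⟨f, s, ε, hs, hε, hlin, hunit⟩ := extend_chain hsm hu hc hr hjl hjt hrj
    have hr'l : A r' l = 0 := by
      rcases hcol r' with h | h | h
      · exact h
      · exact absurd (Or.inl h) (hnew t rfl)
      · exact absurd h (hnb r' hr')
    refine ⟨f, s, ε * A r' j, hs, ?_, ?_, ?_, hunit⟩
    · rcases hε with h | h <;> rcases (hsm r' j hjl).resolve_left hr'j with h' | h' <;>
        simp [h, h']
    · intro ρ hρ
      rw [hlin ρ (fun i hi => hρ i (reachCols_mono hu hi)), hρ j hj1, mul_zero, add_zero]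
    · rw [hlin _ hz, hr'l]
      ring

/-- No row with last entry `b` is reached: the first one would give a determinant `±a ± b`. -/
lemma not_reach_b (hab : a > b) (hb : 0 < b) (hdup : 2 * b ≠ a) (hmod : detSet A = {a, b, 0})
    (hsm : ∀ i j, j ≠ l → A i j = 0 ∨ A i j = 1 ∨ A i j = -1)
    (hcol : ∀ i, A i l = 0 ∨ A i l = a ∨ A i l = b)
    {u : Fin n → Fin m} (hu : ∀ j, j ≠ l → A (u j) = Pi.single j 1) (t : ℕ) :
    ∀ r ∈ reachRows A l a t, A r l ≠ b := by
  induction t with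
  | zero =>
    intro r hr h
    have hra : A r l = a := by simpa [reachRows, reachCols] using hr
    omega
  | succ t ih =>
    intro r' hr' hb'
    by_cases hold : r' ∈ reachRows A l a t
    · exact ih r' hold hb'
    obtain ⟨r, j, hr, hz, hjl, hjt, hj1, hrj, hr'j, hpred⟩ := exists_pred hr' hold
    have hc := exists_chain hsm hcol hu t ih r hr hpred
    obtain ⟨f, s, ε, hs, hε, hlin, -⟩ := extend_chain hsm hu hc hr hjl hjt hrj
    have hdet := hlin (A r') hz
    have e : (A.submatrix f id).updateRow l (A r') =
        A.submatrix (Function.update f l r') id := by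
      ext x y
      by_cases hx : x = l
      · subst hx; simp
      · simp [Matrix.updateRow_apply, hx]
    rw [e, hb'] at hdet
    have hvals : ∃ s' : ℤ, (s' = 1 ∨ s' = -1) ∧
        (A.submatrix (Function.update f l r') id).det = s * b + s' * a := by
      refine ⟨ε * A r' j, ?_, by rw [hdet]; ring⟩
      rcases hε with h | h <;> rcases (hsm r' j hjl).resolve_left hr'j with h' | h' <;>
        simp [h, h']
    obtain ⟨s', hs', hd⟩ := hvals
    have hne : (A.submatrix (Function.update f l r') id).det ≠ 0 := by
      rw [hd]
      rcases hs with rfl | rfl <;> rcases hs' with rfl | rfl <;> omega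
    -- A choice of rows with a repetition has determinant zero.
    have hinj : Function.Injective (Function.update f l r') := by
      intro x y hxy
      by_contra hne'
      refine hne (Matrix.det_zero_of_row_eq hne' ?_)
      ext k
      simp only [Matrix.submatrix_apply, hxy]
    have hmem : |(A.submatrix (Function.update f l r') id).det| ∈ detSet A := ⟨_, hinj, rfl⟩
    rw [hmod] at hmem
    simp only [Set.mem_insert_iff, Set.mem_singleton_iff] at hmem
    rw [hd] at hmem
    -- None of `a + b`, `a - b` and their negatives has absolute value `a`, `b` or `0`.
    rcases abs_choice (s * b + s' * a) with h' | h' <;> rw [h'] at hmem <;>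
      rcases hs with rfl | rfl <;> rcases hs' with rfl | rfl <;> omega

end Chain

/-- A permutation of `Fin m` that lists the elements satisfying `p` first. -/
lemma exists_perm_front {m : ℕ} (p : Fin m → Prop) :
    ∃ (k : ℕ) (σ : Equiv.Perm (Fin m)), k ≤ m ∧ ∀ i, p (σ i) ↔ (i : ℕ) < k := by
  classical
  have hk : Fintype.card {i // p i} ≤ m := by
    simpa using Fintype.card_subtype_le p
  have hcard : Fintype.card {i : Fin m // (i : ℕ) < Fintype.card {i // p i}} =
      Fintype.card {i // p i} := by
    rw [Fintype.card_subtype, Fin.card_filter_val_lt]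
    exact min_eq_right hk
  let e := Fintype.equivOfCardEq hcard
  refine ⟨_, e.extendSubtype, hk, fun i => ⟨fun h => ?_, fun h => e.extendSubtype_mem i h⟩⟩
  by_contra hi
  exact e.extendSubtype_not_mem i hi h

/-- Claim 2 of the decomposition theorem: an `{a,b,0}`-modular matrix (`a > b > 0`,
`2b ≠ a`) whose first `n-1` columns have entries in `{0,±1}`, whose `n`-th column has
entries in `{0,a,b}` (with `a` and `b` both occurring), and whose rows include the first
`n-1` unit vectors, can be brought by row and column permutations (the latter fixing the
`n`-th coordinate) into the block form `[L 0 u; 0 R w]` with `L,R` having `{0,±1}` entries,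
`u ∈ {0,a}^{m₁}`, `w ∈ {0,b}^{m₂}`; rows with `n`-th entry `a` lie in the top block and
rows with `n`-th entry `b` in the bottom block. -/
theorem stmt4 (a b : ℤ) (m n : ℕ) (hab : a > b) (hb : 0 < b) (hdup : 2 * b ≠ a)
    (hmn : n ≤ m) (A : Matrix (Fin m) (Fin n) ℤ) (hrank : A.rank = n)
    (hmod : detSet A = {a, b, 0})
    (hsmall : ∀ (i : Fin m) (j : Fin n), (j : ℕ) < n - 1 →
      A i j = 0 ∨ A i j = 1 ∨ A i j = -1)
    (hcol : ∀ (i : Fin m) (j : Fin n), (j : ℕ) = n - 1 →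
      A i j = 0 ∨ A i j = a ∨ A i j = b)
    (hexa : ∃ (i : Fin m) (j : Fin n), (j : ℕ) = n - 1 ∧ A i j = a)
    (hexb : ∃ (i : Fin m) (j : Fin n), (j : ℕ) = n - 1 ∧ A i j = b)
    (hunits : ∀ k : ℕ, k < n - 1 →
      ∃ i : Fin m, ∀ j : Fin n, A i j = if (j : ℕ) = k then 1 else 0) :
    ∃ (m₁ m₂ n₁ n₂ : ℕ), m₁ + m₂ = m ∧ n₁ + n₂ = n - 1 ∧
    ∃ (σ : Equiv.Perm (Fin m)) (π : Equiv.Perm (Fin n)),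
      (∀ j : Fin n, (j : ℕ) = n - 1 → π j = j) ∧
      ∀ B : Matrix (Fin m) (Fin n) ℤ, B = Matrix.of (fun i j => A (σ i) (π j)) →
        (∀ (i : Fin m) (j : Fin n), (i : ℕ) < m₁ → (j : ℕ) < n₁ →
          B i j = 0 ∨ B i j = 1 ∨ B i j = -1) ∧
        (∀ (i : Fin m) (j : Fin n), (i : ℕ) < m₁ → n₁ ≤ (j : ℕ) → (j : ℕ) < n - 1 →
          B i j = 0) ∧
        (∀ (i : Fin m) (j : Fin n), m₁ ≤ (i : ℕ) → (j : ℕ) < n₁ → B i j = 0) ∧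
        (∀ (i : Fin m) (j : Fin n), m₁ ≤ (i : ℕ) → n₁ ≤ (j : ℕ) → (j : ℕ) < n - 1 →
          B i j = 0 ∨ B i j = 1 ∨ B i j = -1) ∧
        (∀ (i : Fin m) (j : Fin n), (j : ℕ) = n - 1 → (i : ℕ) < m₁ →
          B i j = 0 ∨ B i j = a) ∧
        (∀ (i : Fin m) (j : Fin n), (j : ℕ) = n - 1 → m₁ ≤ (i : ℕ) →
          B i j = 0 ∨ B i j = b) ∧
        (∀ (i : Fin m) (j : Fin n), (j : ℕ) = n - 1 → B i j = a → (i : ℕ) < m₁) ∧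
        (∀ (i : Fin m) (j : Fin n), (j : ℕ) = n - 1 → B i j = b → m₁ ≤ (i : ℕ)) := by
  obtain ⟨-, l, hl, -⟩ := hexa
  have hlt : ∀ j : Fin n, j ≠ l → (j : ℕ) < n - 1 := by
    intro j hj
    have h1 := j.isLt
    have h2 : (j : ℕ) ≠ l := fun h => hj (Fin.ext h)
    omega
  have heq : ∀ j : Fin n, (j : ℕ) = n - 1 → j = l := fun j hj => Fin.ext (hj.trans hl.symm)
  have hsm : ∀ i j, j ≠ l → A i j = 0 ∨ A i j = 1 ∨ A i j = -1 :=
    fun i j hj => hsmall i j (hlt j hj)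
  have hcl : ∀ i, A i l = 0 ∨ A i l = a ∨ A i l = b := fun i => hcol i l hl
  have hu' : ∀ j : Fin n, ∃ i : Fin m, j ≠ l → A i = Pi.single j 1 := by
    intro j
    by_cases hj : j = l
    · exact ⟨⟨j, j.isLt.trans_le hmn⟩, fun h => absurd hj h⟩
    · obtain ⟨i, hi⟩ := hunits j (hlt j hj)
      refine ⟨i, fun _ => ?_⟩
      ext k
      rw [hi k, Pi.single_apply]
      simp [Fin.ext_iff]
  choose u hu using hu'
  set R : Fin m → Prop := fun r => ∃ t, r ∈ reachRows A l a t with hR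
  set C : Fin n → Prop := fun j => ∃ t, j ∈ reachCols A l a t with hC
  have hRb : ∀ r, R r → A r l ≠ b := fun r ⟨t, ht⟩ =>
    not_reach_b hab hb hdup hmod hsm hcl hu t r ht
  have hRa : ∀ r, A r l = a → R r := fun r h => ⟨0, Or.inl h⟩
  have hCl : ¬ C l := fun ⟨t, ht⟩ => reachCols_ne ht rfl
  have hRC : ∀ r j, R r → j ≠ l → ¬ C j → A r j = 0 := by
    rintro r j ⟨t, ht⟩ hj hjC
    by_contra hne
    exact hjC ⟨t + 1, mem_reachCols_succ hj ht hne⟩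
  have hCR : ∀ r j, ¬ R r → C j → A r j = 0 := by
    rintro r j hr ⟨t, ht⟩
    by_contra hne
    exact hr ⟨t, Or.inr ⟨j, ht, hne⟩⟩
  obtain ⟨m₁, σ, hm₁, hσ⟩ := exists_perm_front R
  obtain ⟨n₁, π₀, hn₁, hπ₀⟩ := exists_perm_front C
  have hn₁' : n₁ ≤ l := by
    by_contra! hlt'
    -- Otherwise all `n` columns, among them `l`, would satisfy `C`.
    obtain ⟨j, hj⟩ := π₀.surjective l
    have hj' : ¬ (j : ℕ) < n₁ := fun h => hCl (hj ▸ (hπ₀ j).2 h)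
    have := j.isLt
    omega
  -- Correcting by a transposition of two columns outside `C` makes the permutation fix `l`.
  set π : Equiv.Perm (Fin n) := Equiv.swap l (π₀ l) * π₀ with hπdef
  have hπl : π l = l := by simp [hπdef]
  have hC0 : ¬ C (π₀ l) := fun h => absurd ((hπ₀ l).1 h) (by omega)
  have hπ : ∀ j, C (π j) ↔ (j : ℕ) < n₁ := by
    intro j
    rw [← hπ₀ j]
    simp only [hπdef, Equiv.Perm.mul_apply]
    by_cases h1 : π₀ j = l
    · rw [h1, Equiv.swap_apply_left]; tauto
    · by_cases h2 : π₀ j = π₀ l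
      · rw [h2, Equiv.swap_apply_right]; tauto
      · rw [Equiv.swap_apply_of_ne_of_ne h1 h2]
  have hπne : ∀ j : Fin n, (j : ℕ) < n - 1 → π j ≠ l := by
    intro j hj h
    have : j = l := π.injective (h.trans hπl.symm)
    rw [this] at hj
    omega
  refine ⟨m₁, m - m₁, n₁, n - 1 - n₁, by omega, by omega, σ, π, ?_, ?_⟩
  · intro j hj
    rw [heq j hj, hπl]
  rintro B rfl
  simp only [Matrix.of_apply]
  refine ⟨?_, ?_, ?_, ?_, ?_, ?_, ?_, ?_⟩
  · intro i j _ hj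
    exact hsm _ _ (hπne j (by omega))
  · intro i j hi hj hj'
    exact hRC _ _ ((hσ i).2 hi) (hπne j hj') (fun h => by have := (hπ j).1 h; omega)
  · intro i j hi hj
    exact hCR _ _ (fun h => by have := (hσ i).1 h; omega) ((hπ j).2 hj)
  · intro i j _ _ hj
    exact hsm _ _ (hπne j hj)
  · intro i j hj hi
    rw [heq j hj, hπl]
    have := hRb _ ((hσ i).2 hi)
    rcases hcl (σ i) with h | h | h
    · exact Or.inl h
    · exact Or.inr h
    · exact absurd h this
  · intro i j hj hi
    rw [heq j hj, hπl]
    rcases hcl (σ i) with h | h | h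
    · exact Or.inl h
    · exact absurd ((hσ i).1 (hRa _ h)) (by omega)
    · exact Or.inr h
  · intro i j hj h
    rw [heq j hj, hπl] at h
    exact (hσ i).1 (hRa _ h)
  · intro i j hj h
    rw [heq j hj, hπl] at h
    by_contra! hi
    exact hRb _ ((hσ i).2 hi) h
end

section
/- Let a > b > 0 be integers with 2·b ≠ a. Let A ∈ ℤ^{m×n} with m ≥ n have the block form A = [L 0 u; 0 R w], where L ∈ ℤ^{m₁×n₁} and R ∈ ℤ^{m₂×n₂} are totally unimodular, n₁ + n₂ = n − 1, m₁ + m₂ = m, u ∈ {0,a}^{m₁} has at least one nonzero entry, w ∈ {0,b}^{m₂} has at least one nonzero entry, and the rows of A whose n-th entry is 0 include the unit vectors e₁, …, e_{n−1} ∈ ℤ^n. Let I_a, I_b, I_0 ⊆ [m] denote the sets of indices of rows of A whose n-th entry equals a, b, 0, respectively. Then the following are equivalent: (i) every nonsingular n×n submatrix of A has determinant ±a or ±b; (ii) every nonsingular n×n submatrix of A_{I_a ∪ I_0, ·} has determinant ±a, and every nonsingular n×n submatrix of A_{I_b ∪ I_0, ·} has determinant ±b. -/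
/-!
Everything rests on two facts about a square submatrix `M` of `A` with nonzero determinant.

*Block structure.* Some permutation of the rows makes every diagonal entry of `M` nonzero, so its
`j`-th row is then a top row for `j < n₁` and a bottom row for `n₁ ≤ j < n₁ + n₂`; the last row
may be of either kind. If it is a top row, `M` is block triangular with a nonsingular, hence
unimodular, diagonal block from `R`, and the rows through that block may be exchanged for unit
rows of `A` without changing `|det M|`. What remains is a submatrix of the rows with last entry
in `{0, a}`. If the last row is a bottom row, the same happens with `L` and `{0, b}`
(`IsBlockForm.exists_homogeneous`). This gives the implication from right to left.

*A gap argument.* For the other implication, the determinant of a submatrix with last column in `{0, a}` is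
a multiple of `a`, which excludes `±b`. For last column in `{0, b}` one has to exclude `|det M| = a`
(`IsBlockForm.abs_det_ne`). In that case `b ∣ a`, so `a ≥ 3 * b` because `a ≠ 2 * b`. Take such an
`M` with as few non-unit rows as possible. An entry of `adjugate M` is the determinant of `M` with
one row replaced by a unit vector. In the column of a non-unit row, minimality and the
hypothesis that nonzero determinants are `±a` or `±b` bound such an entry by `b`, and in the last row of `adjugate M` it is bounded by `1` because `diag(L, R)` is
totally unimodular (`IsBlockForm.abs_adjugate_last_le`). By Jacobi's identity
(`det_mul_det_updateRow_updateRow`) the `2 × 2` minors of the adjugate are multiples of `det M`, by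
a factor divisible by `b` when the last row is not involved. Being at most `2 * b ^ 2`, respectively
`2 * b`, in absolute value, those in the columns of two non-unit rows all vanish, which is
impossible for invertible `M` (`exists_adjugate_minor_ne_zero`). So at most one row is not a unit
row, and expanding along the last column gives `|det M| ≤ b < a`. This is the argument showing that
a minimal non-totally-unimodular matrix has determinant `±2`.
-/

/-! ### Determinants and adjugates -/

/-- Jacobi's identity for the `2 × 2` minors of the adjugate. The complementary minor of `M` is
written, up to sign, as the determinant of `M` with two rows replaced by unit vectors. -/
lemma det_mul_det_updateRow_updateRow {n : Type*} [Fintype n] [DecidableEq n]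
    (M : Matrix n n ℤ) {i₁ i₂ : n} (hi : i₁ ≠ i₂) (j₁ j₂ : n) :
    M.det * ((M.updateRow i₁ (Pi.single j₁ 1)).updateRow i₂ (Pi.single j₂ 1)).det =
      M.adjugate j₁ i₁ * M.adjugate j₂ i₂ - M.adjugate j₂ i₁ * M.adjugate j₁ i₂ := by
  set Q := M.updateRow i₁ (Pi.single j₁ 1) with hQ
  -- row `j₂` of `adjugate M * M = det M • 1`
  have hrow : M.det • (Pi.single j₂ 1 : n → ℤ) = ∑ i, M.adjugate j₂ i • M i := by
    have h := congrFun (Matrix.adjugate_mul M) j₂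
    funext k
    have h' := congrFun h k
    rw [Matrix.mul_apply] at h'
    simp only [Finset.sum_apply, Pi.smul_apply, smul_eq_mul]
    rw [h']
    simp [Matrix.one_apply, Pi.single_apply, eq_comm]
  rw [← Matrix.det_updateRow_smul, hrow, ← Matrix.cramer_transpose_apply, map_sum,
    Finset.sum_apply]
  simp only [Matrix.cramer_transpose_apply, Matrix.det_updateRow_smul]
  rw [Finset.sum_eq_add i₁ i₂ hi]
  · -- replacing row `i₂` of `Q` by `M i₁` is, up to a row swap, replacing row `i₂` of `M`
    have h1 : (Q.updateRow i₂ (M i₁)).det = - M.adjugate j₁ i₂ := by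
      rw [Matrix.adjugate_apply]
      have : Q.updateRow i₂ (M i₁) =
          (M.updateRow i₂ (Pi.single j₁ 1)).submatrix (Equiv.swap i₁ i₂) id := by
        ext r c
        by_cases h2 : r = i₂
        · subst h2
          simp [Matrix.updateRow_apply, hi]
        · by_cases h3 : r = i₁
          · subst h3
            simp [Matrix.updateRow_apply, hQ, hi]
          · simp [Matrix.updateRow_apply, hQ, h2, h3, Equiv.swap_apply_of_ne_of_ne]
      rw [this, Matrix.det_permute, Equiv.Perm.sign_swap hi]
      simp
    have h2 : (Q.updateRow i₂ (M i₂)).det = M.adjugate j₁ i₁ := by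
      rw [Matrix.adjugate_apply, ← hQ]
      congr 1
      ext r c
      by_cases h2 : r = i₂
      · subst h2
        simp [Matrix.updateRow_apply, hQ, hi.symm]
      · simp [Matrix.updateRow_apply, h2]
    rw [h1, h2]
    ring
  · intro i _ hne
    rw [Matrix.det_zero_of_row_eq hne.2, mul_zero]
    simp [hQ, hne.1, hne.2]
  · simp
  · simp

/-- Two columns of the adjugate of a nonsingular matrix are linearly independent, so some `2 × 2`
minor in them is nonzero. -/
lemma exists_adjugate_minor_ne_zero {n : Type*} [Fintype n] [DecidableEq n]
    (M : Matrix n n ℤ) (hM : M.det ≠ 0) {i₁ i₂ : n} (hi : i₁ ≠ i₂) :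
    ∃ j₁ j₂, M.adjugate j₁ i₁ * M.adjugate j₂ i₂ - M.adjugate j₂ i₁ * M.adjugate j₁ i₂ ≠ 0 := by
  by_contra! h
  have hmul (i k : n) : ∑ j, M i j * M.adjugate j k = if i = k then M.det else 0 := by
    rw [← Matrix.mul_apply, Matrix.mul_adjugate]
    simp [Matrix.one_apply]
  have hz : ∀ j₂, M.adjugate j₂ i₂ = 0 := by
    intro j₂
    have h0 : ∑ j, M i₁ j * (M.adjugate j i₁ * M.adjugate j₂ i₂
        - M.adjugate j₂ i₁ * M.adjugate j i₂) = 0 :=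
      Finset.sum_eq_zero fun j _ => by rw [h j j₂, mul_zero]
    have h1 : ∑ j, M i₁ j * (M.adjugate j i₁ * M.adjugate j₂ i₂
        - M.adjugate j₂ i₁ * M.adjugate j i₂) =
        (∑ j, M i₁ j * M.adjugate j i₁) * M.adjugate j₂ i₂ -
        (∑ j, M i₁ j * M.adjugate j i₂) * M.adjugate j₂ i₁ := by
      rw [Finset.sum_mul, Finset.sum_mul, ← Finset.sum_sub_distrib]
      exact Finset.sum_congr rfl fun j _ => by ring
    rw [h1, hmul, hmul, if_pos rfl, if_neg hi, zero_mul, sub_zero] at h0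
    exact (mul_eq_zero.mp h0).resolve_left hM
  have := hmul i₂ i₂
  simp [hz] at this
  exact hM this.symm

lemma exists_perm_apply_ne_zero {n : Type*} [Fintype n] [DecidableEq n]
    (M : Matrix n n ℤ) (hM : M.det ≠ 0) : ∃ σ : Equiv.Perm n, ∀ j, M (σ j) j ≠ 0 := by
  rw [Matrix.det_apply] at hM
  obtain ⟨σ, -, h⟩ := Finset.exists_ne_zero_of_sum_ne_zero hM
  refine ⟨σ, fun j hj => h ?_⟩
  have h0 : ∏ i, M (σ i) i = 0 := Finset.prod_eq_zero (Finset.mem_univ j) hj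
  exact (congrArg _ h0).trans (smul_zero _)

/-- If the rows through a unimodular diagonal block of a block triangular matrix are replaced by
the corresponding unit vectors, the absolute value of the determinant does not change. -/
lemma abs_det_eq_of_block {n : Type*} [Fintype n] [DecidableEq n]
    (M M' : Matrix n n ℤ) (p : n → Prop) [DecidablePred p]
    (hM : ∀ i, ¬ p i → ∀ j, p j → M i j = 0)
    (hunit : |(M.toSquareBlockProp p).det| = 1)
    (h₁ : ∀ i, p i → M' i = Pi.single i 1) (h₂ : ∀ i, ¬ p i → M' i = M i) :
    |M.det| = |M'.det| := by
  have hM' : ∀ i, ¬ p i → ∀ j, p j → M' i j = 0 := fun i hi j hj => by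
    rw [h₂ i hi]; exact hM i hi j hj
  rw [Matrix.twoBlockTriangular_det M p hM, Matrix.twoBlockTriangular_det M' p hM', abs_mul,
    abs_mul, hunit]
  have e1 : M'.toSquareBlockProp p = 1 := by
    ext ⟨i, hi⟩ ⟨j, hj⟩
    simp [Matrix.toSquareBlockProp_def, h₁ i hi, Matrix.one_apply, Pi.single_apply, eq_comm]
  have e2 : M'.toSquareBlockProp (fun i => ¬ p i) = M.toSquareBlockProp (fun i => ¬ p i) := by
    ext ⟨i, hi⟩ ⟨j, hj⟩
    simp [Matrix.toSquareBlockProp_def, h₂ i hi]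
  rw [e1, e2]
  simp

lemma dvd_det_of_col {n : Type*} [Fintype n] [DecidableEq n]
    (M : Matrix n n ℤ) (j : n) (d : ℤ) (h : ∀ i, d ∣ M i j) : d ∣ M.det := by
  have hs : M.det = ∑ i, M.adjugate j i * M i j := by
    rw [← Matrix.mul_apply, Matrix.adjugate_mul]; simp
  rw [hs]
  exact Finset.dvd_sum fun i _ => (h i).mul_left _

/-- In a nonsingular block triangular matrix, a diagonal block whose rows come from rows of `A`
satisfying `P` is unimodular, provided that the part of `A` in the rows satisfying `P` and the
columns satisfying `p` is totally unimodular. The function `r` gives the row of `A` used for each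
row of the block. -/
lemma abs_det_block_eq_one {m n : ℕ} (A : Matrix (Fin m) (Fin n) ℤ)
    (M : Matrix (Fin n) (Fin n) ℤ) (P : Fin m → Prop) (p : Fin n → Prop) [DecidablePred p]
    (hTU : ∀ (k : ℕ) (f : Fin k → Fin m) (g : Fin k → Fin n),
      Function.Injective f → Function.Injective g → (∀ i, P (f i)) → (∀ i, p (g i)) →
      (A.submatrix f g).det = 0 ∨ (A.submatrix f g).det = 1 ∨ (A.submatrix f g).det = -1)
    (r : Fin n → Fin m) (hr : ∀ i j, p i → p j → r i = r j → i = j)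
    (hrP : ∀ i, p i → P (r i)) (hrM : ∀ i, p i → M i = A (r i))
    (hblock : ∀ i, ¬ p i → ∀ j, p j → M i j = 0) (hM : M.det ≠ 0) :
    |(M.toSquareBlockProp p).det| = 1 := by
  have h0 : (M.toSquareBlockProp p).det ≠ 0 := by
    rw [Matrix.twoBlockTriangular_det M p hblock] at hM
    exact left_ne_zero_of_mul hM
  let e := Fintype.equivFin {i // p i}
  have key := hTU _ (fun k => r (e.symm k).1) (fun k => (e.symm k).1)
    (fun x y hxy => e.symm.injective (Subtype.ext (hr _ _ (e.symm x).2 (e.symm y).2 hxy)))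
    (fun x y hxy => e.symm.injective (Subtype.ext hxy))
    (fun i => hrP _ (e.symm i).2) (fun i => (e.symm i).2)
  have heq : A.submatrix (fun k => r (e.symm k).1) (fun k => (e.symm k).1) =
      (M.toSquareBlockProp p).submatrix e.symm e.symm := by
    ext x y
    simp [Matrix.toSquareBlockProp_def, hrM _ (e.symm x).2]
  rw [heq, Matrix.det_submatrix_equiv_self] at key
  rcases key with h | h | h
  · exact absurd h h0
  · rw [h]; rfl
  · rw [h]; rfl

/-! ### The block form -/

/-- The matrix `A` has the form `[L 0 u; 0 R w]` with `L`, `R` totally unimodular, `u` with entries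
in `{0, a}` and `w` with entries in `{0, b}`, and all unit vectors other than the last one are rows
of `A`. Total unimodularity of `L` and `R` is expressed through the square submatrices of `A` in
the corresponding rows and columns. -/
structure IsBlockForm (a b : ℤ) (m₁ m₂ n₁ n₂ : ℕ)
    (A : Matrix (Fin (m₁ + m₂)) (Fin (n₁ + n₂ + 1)) ℤ) : Prop where
  left_tu : ∀ (k : ℕ) (f : Fin k → Fin (m₁ + m₂)) (g : Fin k → Fin (n₁ + n₂ + 1)),
    Function.Injective f → Function.Injective g →
    (∀ i, (f i : ℕ) < m₁) → (∀ i, (g i : ℕ) < n₁) →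
    (A.submatrix f g).det = 0 ∨ (A.submatrix f g).det = 1 ∨ (A.submatrix f g).det = -1
  right_tu : ∀ (k : ℕ) (f : Fin k → Fin (m₁ + m₂)) (g : Fin k → Fin (n₁ + n₂ + 1)),
    Function.Injective f → Function.Injective g →
    (∀ i, m₁ ≤ (f i : ℕ)) → (∀ i, n₁ ≤ (g i : ℕ) ∧ (g i : ℕ) < n₁ + n₂) →
    (A.submatrix f g).det = 0 ∨ (A.submatrix f g).det = 1 ∨ (A.submatrix f g).det = -1
  zero_top : ∀ (i : Fin (m₁ + m₂)) (j : Fin (n₁ + n₂ + 1)), (i : ℕ) < m₁ →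
    n₁ ≤ (j : ℕ) → (j : ℕ) < n₁ + n₂ → A i j = 0
  zero_bot : ∀ (i : Fin (m₁ + m₂)) (j : Fin (n₁ + n₂ + 1)), m₁ ≤ (i : ℕ) →
    (j : ℕ) < n₁ → A i j = 0
  last_top : ∀ i : Fin (m₁ + m₂), (i : ℕ) < m₁ →
    A i (Fin.last (n₁ + n₂)) = 0 ∨ A i (Fin.last (n₁ + n₂)) = a
  last_bot : ∀ i : Fin (m₁ + m₂), m₁ ≤ (i : ℕ) →
    A i (Fin.last (n₁ + n₂)) = 0 ∨ A i (Fin.last (n₁ + n₂)) = b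
  /-- `U j` is the index of a row equal to the `j`-th unit vector; its value at the last index is
  arbitrary. -/
  exists_unit : ∃ U : Fin (n₁ + n₂ + 1) → Fin (m₁ + m₂), ∀ j, j ≠ Fin.last (n₁ + n₂) →
    A (U j) = Pi.single j 1

namespace IsBlockForm

variable {a b : ℤ} {m₁ m₂ n₁ n₂ : ℕ} {A : Matrix (Fin (m₁ + m₂)) (Fin (n₁ + n₂ + 1)) ℤ}

/-- The last row of the adjugate consists of signed maximal minors of rows of `diag(L, R)`, a
totally unimodular matrix. -/
lemma abs_adjugate_last_le (H : IsBlockForm a b m₁ m₂ n₁ n₂ A)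
    (f : Fin (n₁ + n₂ + 1) → Fin (m₁ + m₂)) (hf : Function.Injective f)
    (i : Fin (n₁ + n₂ + 1)) :
    |(A.submatrix f id).adjugate (Fin.last (n₁ + n₂)) i| ≤ 1 := by
  rw [Matrix.adjugate_apply]
  set Q := (A.submatrix f id).updateRow i (Pi.single (Fin.last (n₁ + n₂)) 1) with hQ
  by_cases hQ0 : Q.det = 0
  · simp [hQ0]
  obtain ⟨σ, hσ⟩ := exists_perm_apply_ne_zero Q hQ0
  -- row `i` of `Q` is zero outside the last column
  have hlast : σ (Fin.last _) = i := by
    have h := hσ (σ.symm i)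
    rw [Equiv.apply_symm_apply, hQ, Matrix.updateRow_self, Pi.single_apply] at h
    have h' : σ.symm i = Fin.last _ := by
      by_contra hne
      exact h (if_neg hne)
    rw [← h', Equiv.apply_symm_apply]
  set N := Q.submatrix σ id with hN
  have hdet : |N.det| = |Q.det| := by
    rw [hN, Matrix.det_permute, abs_mul]
    rcases Int.units_eq_one_or (Equiv.Perm.sign σ) with h | h <;> simp [h]
  have hN0 : N.det ≠ 0 := by
    rw [← abs_ne_zero, hdet, abs_ne_zero]; exact hQ0
  have hNlast : N (Fin.last _) = Pi.single (Fin.last _) 1 := by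
    funext c
    simp [hN, hQ, hlast]
  have hNrow : ∀ j, j ≠ Fin.last _ → N j = A (f (σ j)) := by
    intro j hj
    have : σ j ≠ i := fun h => hj (σ.injective (h.trans hlast.symm))
    funext c
    simp [hN, hQ, Matrix.updateRow_apply, this]
  have hNne : ∀ j, N j j ≠ 0 := hσ
  have htop : ∀ j : Fin (n₁ + n₂ + 1), (j : ℕ) < n₁ → (f (σ j) : ℕ) < m₁ := by
    intro j hj
    by_contra h
    have hjl : j ≠ Fin.last _ := by
      rintro rfl; simp at hj
    exact hNne j (by rw [hNrow j hjl]; exact H.zero_bot _ _ (not_lt.mp h) hj)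
  have hbot : ∀ j : Fin (n₁ + n₂ + 1), n₁ ≤ (j : ℕ) ∧ (j : ℕ) < n₁ + n₂ →
      m₁ ≤ (f (σ j) : ℕ) := by
    intro j hj
    by_contra h
    have hjl : j ≠ Fin.last _ := by
      rintro rfl; simp at hj
    exact hNne j (by rw [hNrow j hjl]; exact H.zero_top _ _ (not_le.mp h) hj.1 hj.2)
  have hcases : ∀ j : Fin (n₁ + n₂ + 1), (j : ℕ) < n₁ ∨
      (n₁ ≤ (j : ℕ) ∧ (j : ℕ) < n₁ + n₂) ∨ j = Fin.last _ := by
    intro j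
    rw [Fin.ext_iff, Fin.val_last]
    omega
  -- the rows of the `R`-block are made unit vectors here, those of the `L`-block in `e2`
  set N' : Matrix (Fin (n₁ + n₂ + 1)) (Fin (n₁ + n₂ + 1)) ℤ := fun j =>
    if n₁ ≤ (j : ℕ) ∧ (j : ℕ) < n₁ + n₂ then Pi.single j 1 else N j with hN'
  have hne_last : ∀ j : Fin (n₁ + n₂ + 1), (j : ℕ) < n₁ + n₂ → j ≠ Fin.last _ := by
    rintro j hj rfl
    simp at hj
  have hblock : ∀ i : Fin (n₁ + n₂ + 1), ¬ (n₁ ≤ (i : ℕ) ∧ (i : ℕ) < n₁ + n₂) →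
      ∀ j : Fin (n₁ + n₂ + 1), (n₁ ≤ (j : ℕ) ∧ (j : ℕ) < n₁ + n₂) → N i j = 0 := by
    intro i hi j hj
    rcases hcases i with h | h | h
    · rw [hNrow i (hne_last i (by omega))]
      exact H.zero_top _ _ (htop i h) hj.1 hj.2
    · exact absurd h hi
    · rw [h, hNlast, Pi.single_apply, if_neg (hne_last j hj.2)]
  have e1 : |N.det| = |N'.det| := by
    refine abs_det_eq_of_block N N' (fun j => n₁ ≤ (j : ℕ) ∧ (j : ℕ) < n₁ + n₂) hblock ?_
      (fun j hj => if_pos hj) (fun j hj => if_neg hj)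
    exact abs_det_block_eq_one A N (fun r => m₁ ≤ (r : ℕ)) _ H.right_tu (fun j => f (σ j))
      (fun x y _ _ hxy => σ.injective (hf hxy)) hbot
      (fun j hj => hNrow j (hne_last j hj.2)) hblock hN0
  have hN'0 : N'.det ≠ 0 := by
    rw [← abs_ne_zero, ← e1, abs_ne_zero]; exact hN0
  have hN'row : ∀ j : Fin (n₁ + n₂ + 1), ¬ (j : ℕ) < n₁ → N' j = Pi.single j 1 := by
    intro j hj
    rcases hcases j with h | h | h
    · exact absurd h hj
    · exact if_pos h
    · rw [hN']
      simp only
      rw [if_neg (by rw [h]; simp), h, hNlast]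
  have hblock' : ∀ i : Fin (n₁ + n₂ + 1), ¬ (i : ℕ) < n₁ →
      ∀ j : Fin (n₁ + n₂ + 1), (j : ℕ) < n₁ → N' i j = 0 := by
    intro i hi j hj
    rw [hN'row i hi, Pi.single_apply, if_neg]
    rintro rfl
    exact hi hj
  have e2 : |N'.det| = |(1 : Matrix (Fin (n₁ + n₂ + 1)) (Fin (n₁ + n₂ + 1)) ℤ).det| := by
    have hone : ∀ j : Fin (n₁ + n₂ + 1),
        (1 : Matrix (Fin (n₁ + n₂ + 1)) (Fin (n₁ + n₂ + 1)) ℤ) j = Pi.single j 1 := by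
      intro j
      funext c
      simp [Matrix.one_apply, Pi.single_apply, eq_comm]
    refine abs_det_eq_of_block N' 1 (fun j => (j : ℕ) < n₁) hblock' ?_
      (fun j _ => hone j) (fun j hj => by rw [hN'row j hj, hone j])
    refine abs_det_block_eq_one A N' (fun r => (r : ℕ) < m₁) _ H.left_tu (fun j => f (σ j))
      (fun x y _ _ hxy => σ.injective (hf hxy)) htop ?_ hblock' hN'0
    intro j hj
    rw [← hNrow j (hne_last j (by omega))]
    exact if_neg (by omega)
  rw [← hdet, e1, e2]
  simp

/-- Up to sign, every nonzero `n × n` subdeterminant of `A` already occurs among the rows with last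
entry in `{0, a}` or among those with last entry in `{0, b}`. -/
lemma exists_homogeneous (H : IsBlockForm a b m₁ m₂ n₁ n₂ A)
    (f : Fin (n₁ + n₂ + 1) → Fin (m₁ + m₂)) (hf : Function.Injective f)
    (h0 : (A.submatrix f id).det ≠ 0) :
    ∃ f' : Fin (n₁ + n₂ + 1) → Fin (m₁ + m₂), Function.Injective f' ∧
      |(A.submatrix f id).det| = |(A.submatrix f' id).det| ∧
      ((∀ i, A (f' i) (Fin.last (n₁ + n₂)) = a ∨ A (f' i) (Fin.last (n₁ + n₂)) = 0) ∨
       (∀ i, A (f' i) (Fin.last (n₁ + n₂)) = b ∨ A (f' i) (Fin.last (n₁ + n₂)) = 0)) := by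
  obtain ⟨σ, hσ⟩ := exists_perm_apply_ne_zero _ h0
  obtain ⟨U, hU⟩ := H.exists_unit
  set g : Fin (n₁ + n₂ + 1) → Fin (m₁ + m₂) := fun j => f (σ j) with hg
  have hginj : Function.Injective g := hf.comp σ.injective
  have hgne : ∀ j, A (g j) j ≠ 0 := hσ
  have hdet : |(A.submatrix f id).det| = |(A.submatrix g id).det| := by
    have : A.submatrix g id = (A.submatrix f id).submatrix σ id := rfl
    rw [this, Matrix.det_permute, abs_mul]
    rcases Int.units_eq_one_or (Equiv.Perm.sign σ) with h | h <;> simp [h]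
  have hg0 : (A.submatrix g id).det ≠ 0 := by
    rw [← abs_ne_zero, ← hdet, abs_ne_zero]; exact h0
  have htop : ∀ j : Fin (n₁ + n₂ + 1), (j : ℕ) < n₁ → (g j : ℕ) < m₁ := by
    intro j hj
    by_contra h
    exact hgne j (H.zero_bot _ _ (not_lt.mp h) hj)
  have hbot : ∀ j : Fin (n₁ + n₂ + 1), n₁ ≤ (j : ℕ) ∧ (j : ℕ) < n₁ + n₂ → m₁ ≤ (g j : ℕ) := by
    intro j hj
    by_contra h
    exact hgne j (H.zero_top _ _ (not_le.mp h) hj.1 hj.2)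
  have hcases : ∀ j : Fin (n₁ + n₂ + 1), (j : ℕ) < n₁ ∨
      (n₁ ≤ (j : ℕ) ∧ (j : ℕ) < n₁ + n₂) ∨ j = Fin.last _ := by
    intro j
    rw [Fin.ext_iff, Fin.val_last]
    omega
  have hne_last : ∀ j : Fin (n₁ + n₂ + 1), (j : ℕ) < n₁ + n₂ → j ≠ Fin.last _ := by
    rintro j hj rfl
    simp at hj
  have hUinj : ∀ i j : Fin (n₁ + n₂ + 1), (i : ℕ) < n₁ + n₂ → (j : ℕ) < n₁ + n₂ →
      U i = U j → i = j := by
    intro i j hi hj h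
    have h1 := hU i (hne_last i hi)
    rw [h, hU j (hne_last j hj)] at h1
    have h2 := congrFun h1 i
    rw [Pi.single_eq_same, Pi.single_apply] at h2
    by_contra hne
    rw [if_neg hne] at h2
    exact zero_ne_one h2
  have hUlast : ∀ j : Fin (n₁ + n₂ + 1), (j : ℕ) < n₁ + n₂ → A (U j) (Fin.last _) = 0 := by
    intro j hj
    rw [hU j (hne_last j hj), Pi.single_apply, if_neg (hne_last j hj).symm]
  -- the kind of the last row decides which block, `R` or `L`, is replaced by unit rows
  by_cases hl : (g (Fin.last _) : ℕ) < m₁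
  · have hrow : ∀ j : Fin (n₁ + n₂ + 1), ¬ (n₁ ≤ (j : ℕ) ∧ (j : ℕ) < n₁ + n₂) →
        (g j : ℕ) < m₁ := by
      intro j hj
      rcases hcases j with h | h | h
      · exact htop j h
      · exact absurd h hj
      · rwa [h]
    have hUbot : ∀ j : Fin (n₁ + n₂ + 1), (n₁ ≤ (j : ℕ) ∧ (j : ℕ) < n₁ + n₂) →
        m₁ ≤ (U j : ℕ) := by
      intro j hj
      by_contra h
      have := H.zero_top _ _ (not_le.mp h) hj.1 hj.2
      rw [hU j (hne_last j hj.2), Pi.single_eq_same] at this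
      exact one_ne_zero this
    have hblock : ∀ i : Fin (n₁ + n₂ + 1), ¬ (n₁ ≤ (i : ℕ) ∧ (i : ℕ) < n₁ + n₂) →
        ∀ j : Fin (n₁ + n₂ + 1), (n₁ ≤ (j : ℕ) ∧ (j : ℕ) < n₁ + n₂) →
        (A.submatrix g id) i j = 0 :=
      fun i hi j hj => H.zero_top _ _ (hrow i hi) hj.1 hj.2
    refine ⟨fun j => if n₁ ≤ (j : ℕ) ∧ (j : ℕ) < n₁ + n₂ then U j else g j, ?_, ?_, Or.inl ?_⟩
    · intro i j hij
      simp only at hij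
      split_ifs at hij with h1 h2 h2
      · exact hUinj i j h1.2 h2.2 hij
      · have := hUbot i h1
        have := hrow j h2
        rw [hij] at *
        omega
      · have := hUbot j h2
        have := hrow i h1
        rw [hij] at *
        omega
      · exact hginj hij
    · rw [hdet]
      refine abs_det_eq_of_block _ _ (fun j => n₁ ≤ (j : ℕ) ∧ (j : ℕ) < n₁ + n₂) hblock ?_ ?_ ?_
      · exact abs_det_block_eq_one A _ (fun r => m₁ ≤ (r : ℕ)) _ H.right_tu g
          (fun x y _ _ hxy => hginj hxy) hbot (fun j _ => rfl) hblock hg0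
      · intro i hi
        rw [← hU i (hne_last i hi.2)]
        funext c
        simp [hi]
      · intro i hi
        funext c
        simp only [Matrix.submatrix_apply, if_neg hi]
    · intro i
      simp only
      split_ifs with h
      · exact Or.inr (hUlast i h.2)
      · exact (H.last_top _ (hrow i h)).symm
  · have hrow : ∀ j : Fin (n₁ + n₂ + 1), ¬ (j : ℕ) < n₁ → m₁ ≤ (g j : ℕ) := by
      intro j hj
      rcases hcases j with h | h | h
      · exact absurd h hj
      · exact hbot j h
      · rw [h]; exact not_lt.mp hl
    have hUtop : ∀ j : Fin (n₁ + n₂ + 1), (j : ℕ) < n₁ → (U j : ℕ) < m₁ := by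
      intro j hj
      by_contra h
      have := H.zero_bot _ _ (not_lt.mp h) hj
      rw [hU j (hne_last j (by omega)), Pi.single_eq_same] at this
      exact one_ne_zero this
    have hblock : ∀ i : Fin (n₁ + n₂ + 1), ¬ (i : ℕ) < n₁ →
        ∀ j : Fin (n₁ + n₂ + 1), (j : ℕ) < n₁ → (A.submatrix g id) i j = 0 :=
      fun i hi j hj => H.zero_bot _ _ (hrow i hi) hj
    refine ⟨fun j => if (j : ℕ) < n₁ then U j else g j, ?_, ?_, Or.inr ?_⟩
    · intro i j hij
      simp only at hij
      split_ifs at hij with h1 h2 h2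
      · exact hUinj i j (by omega) (by omega) hij
      · have := hUtop i h1
        have := hrow j h2
        rw [hij] at *
        omega
      · have := hUtop j h2
        have := hrow i h1
        rw [hij] at *
        omega
      · exact hginj hij
    · rw [hdet]
      refine abs_det_eq_of_block _ _ (fun j => (j : ℕ) < n₁) hblock ?_ ?_ ?_
      · exact abs_det_block_eq_one A _ (fun r => (r : ℕ) < m₁) _ H.left_tu g
          (fun x y _ _ hxy => hginj hxy) htop (fun j _ => rfl) hblock hg0
      · intro i hi
        rw [← hU i (hne_last i (by omega))]
        funext c
        simp [hi]
      · intro i hi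
        funext c
        simp only [Matrix.submatrix_apply, if_neg hi]
    · intro i
      simp only
      split_ifs with h
      · exact Or.inr (hUlast i (by omega))
      · exact (H.last_bot _ (hrow i h)).symm

/-! ### Excluding determinant `±a` for last column in `{0, b}` -/

open Classical in
/-- If all nonzero `n × n` subdeterminants of `A` are `±a` or `±b`, a submatrix of the rows with last entry in `{0, b}` does not have determinant `±a`.
The induction is on the number `c` of rows that are not unit vectors. -/
lemma abs_det_ne (H : IsBlockForm a b m₁ m₂ n₁ n₂ A) (hab : a > b) (hb : 0 < b)
    (hdup : 2 * b ≠ a)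
    (hdet : ∀ f : Fin (n₁ + n₂ + 1) → Fin (m₁ + m₂), Function.Injective f →
        (A.submatrix f id).det ≠ 0 →
        (A.submatrix f id).det = a ∨ (A.submatrix f id).det = -a ∨
        (A.submatrix f id).det = b ∨ (A.submatrix f id).det = -b)
    (c : ℕ) (f : Fin (n₁ + n₂ + 1) → Fin (m₁ + m₂)) (hf : Function.Injective f)
    (hrows : ∀ i, A (f i) (Fin.last (n₁ + n₂)) = b ∨ A (f i) (Fin.last (n₁ + n₂)) = 0)
    (hc : (Finset.univ.filter fun i =>
      ¬ ∃ j, j ≠ Fin.last (n₁ + n₂) ∧ A (f i) = Pi.single j 1).card = c) :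
    |(A.submatrix f id).det| ≠ a := by
  induction c using Nat.strong_induction_on generalizing f with
  | _ c ih =>
  intro habs
  obtain ⟨U, hU⟩ := H.exists_unit
  set M := A.submatrix f id with hM
  have hM0 : M.det ≠ 0 := by
    rw [← abs_ne_zero, habs]; omega
  have hba : b ∣ a := by
    rw [← habs, dvd_abs]
    refine dvd_det_of_col M (Fin.last _) b fun i => ?_
    rcases hrows i with h | h
    · exact (dvd_of_eq h.symm)
    · exact (dvd_zero b).trans (dvd_of_eq h.symm)
  have h3 : 3 * b ≤ a := by
    obtain ⟨k, rfl⟩ := hba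
    have hk1 : 1 < k := by nlinarith
    have hk2 : k ≠ 2 := by rintro rfl; exact hdup (mul_comm _ _)
    have : 3 ≤ k := by omega
    nlinarith
  -- replacing a non-unit row by a unit row lowers `c`, so determinant `±a` cannot occur there
  have hadj : ∀ i, (¬ ∃ j, j ≠ Fin.last (n₁ + n₂) ∧ A (f i) = Pi.single j 1) →
      ∀ j, j ≠ Fin.last _ → |M.adjugate j i| ≤ b := by
    intro i hi j hj
    have hupd : M.updateRow i (Pi.single j 1) = A.submatrix (Function.update f i (U j)) id := by
      ext r s
      by_cases hr : r = i
      · subst hr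
        simp [hU j hj]
      · simp [Matrix.updateRow_apply, hr, hM]
    rw [Matrix.adjugate_apply, hupd]
    -- if the unit row is already present, the new matrix has two equal rows
    by_cases hdupl : ∃ i', i' ≠ i ∧ f i' = U j
    · obtain ⟨i', hne, hi'⟩ := hdupl
      rw [Matrix.det_zero_of_row_eq hne, abs_zero]
      · exact hb.le
      · funext s
        simp [hne, hi']
    push Not at hdupl
    have hinj : Function.Injective (Function.update f i (U j)) := by
      intro x y hxy
      by_cases hx : x = i <;> by_cases hy : y = i
      · rw [hx, hy]
      · subst hx
        simp only [Function.update_self, Function.update_of_ne hy] at hxy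
        exact absurd hxy.symm (hdupl y hy)
      · subst hy
        simp only [Function.update_self, Function.update_of_ne hx] at hxy
        exact absurd hxy (hdupl x hx)
      · simp only [Function.update_of_ne hx, Function.update_of_ne hy] at hxy
        exact hf hxy
    have hlt : (Finset.univ.filter fun r => ¬ ∃ j', j' ≠ Fin.last (n₁ + n₂) ∧
        A (Function.update f i (U j) r) = Pi.single j' 1).card < c := by
      rw [← hc]
      refine Finset.card_lt_card ?_
      rw [Finset.ssubset_iff_of_subset]
      · refine ⟨i, by simpa using hi, ?_⟩
        simp only [Finset.mem_filter, not_and, not_not]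
        exact fun _ => ⟨j, hj, by rw [Function.update_self]; exact hU j hj⟩
      · intro r hr
        rw [Finset.mem_filter] at hr ⊢
        refine ⟨hr.1, ?_⟩
        by_cases hri : r = i
        · rw [hri]; exact hi
        · have := hr.2
          rwa [Function.update_of_ne hri] at this
    have hne := ih _ hlt (Function.update f i (U j)) hinj (by
      intro r
      by_cases hri : r = i
      · subst hri
        right
        rw [Function.update_self, hU j hj, Pi.single_apply, if_neg hj.symm]
      · rw [Function.update_of_ne hri]; exact hrows r) rfl
    by_cases hz : (A.submatrix (Function.update f i (U j)) id).det = 0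
    · rw [hz, abs_zero]; exact hb.le
    have ha0 : |a| = a := abs_of_pos (by omega)
    rcases hdet _ hinj hz with h | h | h | h
    · exact absurd (by rw [h, ha0]) hne
    · exact absurd (by rw [h, abs_neg, ha0]) hne
    · rw [h, abs_of_pos hb]
    · rw [h, abs_neg, abs_of_pos hb]
  have hadjl : ∀ i, |M.adjugate (Fin.last _) i| ≤ 1 := H.abs_adjugate_last_le f hf
  by_cases htwo : ∃ i₁ i₂, i₁ ≠ i₂ ∧
      (¬ ∃ j, j ≠ Fin.last (n₁ + n₂) ∧ A (f i₁) = Pi.single j 1) ∧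
      (¬ ∃ j, j ≠ Fin.last (n₁ + n₂) ∧ A (f i₂) = Pi.single j 1)
  · obtain ⟨i₁, i₂, hne, h1, h2⟩ := htwo
    obtain ⟨j₁, j₂, hminor⟩ := exists_adjugate_minor_ne_zero M hM0 hne
    have hjac := det_mul_det_updateRow_updateRow M hne j₁ j₂
    set t := ((M.updateRow i₁ (Pi.single j₁ 1)).updateRow i₂ (Pi.single j₂ 1)).det with ht
    have ht0 : t ≠ 0 := by
      intro h
      rw [h, mul_zero] at hjac
      exact hminor hjac.symm
    have habs2 := congrArg abs hjac
    rw [abs_mul, habs] at habs2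
    have hle : a * |t| ≤ |M.adjugate j₁ i₁| * |M.adjugate j₂ i₂| +
        |M.adjugate j₂ i₁| * |M.adjugate j₁ i₂| := by
      rw [habs2, ← abs_mul, ← abs_mul]
      exact abs_sub _ _
    have hmul : ∀ {x y X Y : ℤ}, |x| ≤ X → |y| ≤ Y → |x| * |y| ≤ X * Y := fun hx hy =>
      mul_le_mul hx hy (abs_nonneg _) ((abs_nonneg _).trans hx)
    have ht1 : 1 ≤ |t| := Int.one_le_abs ht0
    -- the minor is nonzero, yet smaller than the nonzero multiple `det M * t` it equals
    by_cases hj₁ : j₁ = Fin.last _ <;> by_cases hj₂ : j₂ = Fin.last _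
    · rw [hj₁, hj₂] at hminor
      exact hminor (by ring)
    · have e1 := hmul (hj₁ ▸ hadjl i₁) (hadj i₂ h2 j₂ hj₂)
      have e2 := hmul (hadj i₁ h1 j₂ hj₂) (hj₁ ▸ hadjl i₂)
      nlinarith
    · have e1 := hmul (hadj i₁ h1 j₁ hj₁) (hj₂ ▸ hadjl i₂)
      have e2 := hmul (hj₂ ▸ hadjl i₁) (hadj i₂ h2 j₁ hj₁)
      nlinarith
    · have e1 := hmul (hadj i₁ h1 j₁ hj₁) (hadj i₂ h2 j₂ hj₂)
      have e2 := hmul (hadj i₁ h1 j₂ hj₂) (hadj i₂ h2 j₁ hj₁)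
      have hbt : b ∣ t := by
        refine dvd_det_of_col _ (Fin.last _) b fun i => ?_
        by_cases hi2 : i = i₂
        · subst hi2
          simp [Ne.symm hj₂]
        by_cases hi1 : i = i₁
        · subst hi1
          simp [Matrix.updateRow_apply, hi2, Ne.symm hj₁]
        · simp only [Matrix.updateRow_apply, hi2, hi1, if_false, hM, Matrix.submatrix_apply, id]
          rcases hrows i with h | h <;> simp [h]
      have hbt' : b ≤ |t| := Int.le_of_dvd (abs_pos.mpr ht0) ((dvd_abs _ _).mpr hbt)
      nlinarith
  · -- at most one row is not a unit row, so the last column has a single nonzero entry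
    push Not at htwo
    have hsum := Matrix.det_eq_sum_mul_adjugate_col M (Fin.last _)
    have hunit : ∀ i, (∃ j, j ≠ Fin.last (n₁ + n₂) ∧ A (f i) = Pi.single j 1) →
        M i (Fin.last _) = 0 := by
      rintro i ⟨j, hj, h⟩
      rw [hM, Matrix.submatrix_apply, h, id, Pi.single_apply, if_neg hj.symm]
    obtain ⟨i₀, -, hi₀⟩ := Finset.exists_ne_zero_of_sum_ne_zero (hsum ▸ hM0)
    have hn₀ : ¬ ∃ j, j ≠ Fin.last (n₁ + n₂) ∧ A (f i₀) = Pi.single j 1 := fun h =>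
      hi₀ (by rw [hunit i₀ h, zero_mul])
    rw [Finset.sum_eq_single i₀] at hsum
    · have hle : |M i₀ (Fin.last _)| ≤ b := by
        rw [hM, Matrix.submatrix_apply, id]
        rcases hrows i₀ with h | h
        · rw [h, abs_of_pos hb]
        · rw [h, abs_zero]; exact hb.le
      have := mul_le_mul hle (hadjl i₀) (abs_nonneg _) hb.le
      rw [← abs_mul, ← hsum, habs] at this
      omega
    · intro i _ hi
      have : ∃ j, j ≠ Fin.last (n₁ + n₂) ∧ A (f i) = Pi.single j 1 := by
        by_contra hcon
        obtain ⟨j, hj, h⟩ := htwo i i₀ hi (by push Not at hcon; exact hcon)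
        exact hn₀ ⟨j, hj, h⟩
      rw [hunit i this, zero_mul]
    · simp

end IsBlockForm

/-- Equivalence (i) ⟺ (ii)∧(iii) in the proof of the recognition algorithm: for a matrix
`A = [L 0 u; 0 R w]` (`a > b > 0`, `2b ≠ a`) with `L,R` totally unimodular, `u ∈ {0,a}^{m₁}`
and `w ∈ {0,b}^{m₂}` each with a nonzero entry, and whose rows with `n`-th entry `0`
include the first `n-1` unit vectors: every nonsingular `n×n` submatrix of `A` has
determinant `±a` or `±b` iff every nonsingular `n×n` submatrix of `A_{I_a ∪ I_0,·}` has
determinant `±a` and every nonsingular `n×n` submatrix of `A_{I_b ∪ I_0,·}` has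
determinant `±b`. -/
theorem stmt6 (a b : ℤ) (m₁ m₂ n₁ n₂ : ℕ) (hab : a > b) (hb : 0 < b) (hdup : 2 * b ≠ a)
    (hmn : n₁ + n₂ + 1 ≤ m₁ + m₂)
    (A : Matrix (Fin (m₁ + m₂)) (Fin (n₁ + n₂ + 1)) ℤ)
    -- L is totally unimodular
    (hLTU : ∀ (k : ℕ) (f : Fin k → Fin (m₁ + m₂)) (g : Fin k → Fin (n₁ + n₂ + 1)),
      Function.Injective f → Function.Injective g →
      (∀ i, (f i : ℕ) < m₁) → (∀ i, (g i : ℕ) < n₁) →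
      (A.submatrix f g).det = 0 ∨ (A.submatrix f g).det = 1 ∨ (A.submatrix f g).det = -1)
    -- R is totally unimodular
    (hRTU : ∀ (k : ℕ) (f : Fin k → Fin (m₁ + m₂)) (g : Fin k → Fin (n₁ + n₂ + 1)),
      Function.Injective f → Function.Injective g →
      (∀ i, m₁ ≤ (f i : ℕ)) → (∀ i, n₁ ≤ (g i : ℕ) ∧ (g i : ℕ) < n₁ + n₂) →
      (A.submatrix f g).det = 0 ∨ (A.submatrix f g).det = 1 ∨ (A.submatrix f g).det = -1)
    -- the two off-diagonal zero blocks
    (hzero₁ : ∀ (i : Fin (m₁ + m₂)) (j : Fin (n₁ + n₂ + 1)), (i : ℕ) < m₁ →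
      n₁ ≤ (j : ℕ) → (j : ℕ) < n₁ + n₂ → A i j = 0)
    (hzero₂ : ∀ (i : Fin (m₁ + m₂)) (j : Fin (n₁ + n₂ + 1)), m₁ ≤ (i : ℕ) →
      (j : ℕ) < n₁ → A i j = 0)
    -- the last column
    (hu : ∀ i : Fin (m₁ + m₂), (i : ℕ) < m₁ →
      A i (Fin.last (n₁ + n₂)) = 0 ∨ A i (Fin.last (n₁ + n₂)) = a)
    (hw : ∀ i : Fin (m₁ + m₂), m₁ ≤ (i : ℕ) →
      A i (Fin.last (n₁ + n₂)) = 0 ∨ A i (Fin.last (n₁ + n₂)) = b)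
    (hua : ∃ i : Fin (m₁ + m₂), (i : ℕ) < m₁ ∧ A i (Fin.last (n₁ + n₂)) ≠ 0)
    (hwb : ∃ i : Fin (m₁ + m₂), m₁ ≤ (i : ℕ) ∧ A i (Fin.last (n₁ + n₂)) ≠ 0)
    -- rows with n-th entry 0 include the first n-1 unit vectors
    (hunits : ∀ k : ℕ, k < n₁ + n₂ → ∃ i : Fin (m₁ + m₂),
      A i (Fin.last (n₁ + n₂)) = 0 ∧
      ∀ j : Fin (n₁ + n₂ + 1), A i j = if (j : ℕ) = k then 1 else 0) :
    -- (i) ⟺ (ii) ∧ (iii)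
    ((∀ f : Fin (n₁ + n₂ + 1) → Fin (m₁ + m₂), Function.Injective f →
        (A.submatrix f id).det ≠ 0 →
        (A.submatrix f id).det = a ∨ (A.submatrix f id).det = -a ∨
        (A.submatrix f id).det = b ∨ (A.submatrix f id).det = -b)
      ↔
      ((∀ f : Fin (n₁ + n₂ + 1) → Fin (m₁ + m₂), Function.Injective f →
          (∀ i, A (f i) (Fin.last (n₁ + n₂)) = a ∨ A (f i) (Fin.last (n₁ + n₂)) = 0) →
          (A.submatrix f id).det ≠ 0 →
          (A.submatrix f id).det = a ∨ (A.submatrix f id).det = -a) ∧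
       (∀ f : Fin (n₁ + n₂ + 1) → Fin (m₁ + m₂), Function.Injective f →
          (∀ i, A (f i) (Fin.last (n₁ + n₂)) = b ∨ A (f i) (Fin.last (n₁ + n₂)) = 0) →
          (A.submatrix f id).det ≠ 0 →
          (A.submatrix f id).det = b ∨ (A.submatrix f id).det = -b))) := by
  have H : IsBlockForm a b m₁ m₂ n₁ n₂ A := by
    refine ⟨hLTU, hRTU, hzero₁, hzero₂, hu, hw, ?_⟩
    have hex : ∀ j : Fin (n₁ + n₂ + 1), ∃ i : Fin (m₁ + m₂),
        j ≠ Fin.last (n₁ + n₂) → A i = Pi.single j 1 := by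
      intro j
      by_cases hj : j = Fin.last (n₁ + n₂)
      · obtain ⟨i, -⟩ := hua
        exact ⟨i, fun h => absurd hj h⟩
      · have hj' : (j : ℕ) < n₁ + n₂ := by
          rw [Fin.ext_iff, Fin.val_last] at hj
          omega
        obtain ⟨i, -, hi⟩ := hunits j hj'
        refine ⟨i, fun _ => ?_⟩
        funext k
        rw [hi k, Pi.single_apply]
        simp only [Fin.ext_iff]
    choose U hU using hex
    exact ⟨U, hU⟩
  constructor
  · intro h
    refine ⟨fun f hf hrows h0 => ?_, fun f hf hrows h0 => ?_⟩
    · have hdvd : a ∣ (A.submatrix f id).det := by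
        refine dvd_det_of_col _ (Fin.last _) a fun i => ?_
        rcases hrows i with h | h <;> simp [h]
      have hnd : ¬ a ∣ b := fun h => by
        have := Int.le_of_dvd hb h
        omega
      rcases h f hf h0 with h | h | h | h
      · exact Or.inl h
      · exact Or.inr h
      · exact absurd (h ▸ hdvd) hnd
      · exact absurd ((dvd_neg).mp (h ▸ hdvd)) hnd
    · have hne := H.abs_det_ne hab hb hdup h _ f hf hrows rfl
      have ha0 : |a| = a := abs_of_pos (by omega)
      rcases h f hf h0 with h | h | h | h
      · exact absurd (by rw [h, ha0]) hne
      · exact absurd (by rw [h, abs_neg, ha0]) hne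
      · exact Or.inl h
      · exact Or.inr h
  · rintro ⟨h₁, h₂⟩ f hf h0
    obtain ⟨f', hf', habs, hrows⟩ := H.exists_homogeneous f hf h0
    have h0' : (A.submatrix f' id).det ≠ 0 := by
      rw [← abs_ne_zero, ← habs, abs_ne_zero]
      exact h0
    have hsign := abs_eq_abs.mp habs
    rcases hrows with hrows | hrows
    · have := h₁ f' hf' hrows h0'
      omega
    · have := h₂ f' hf' hrows h0'
      omega
end
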